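/- arXiv:1812.00830 — 8 statements merged into one kernel-verified Lean document; each statement's English description precedes it below -/
import Mathlib

section
/- Let (R,𝔪) be an artinian local ring. Then every finitely generated R-module is torsion-less if and only if R is injective as a module over itself (i.e., R is Gorenstein of dimension zero). -/
/-!
Torsion-lessness of all finitely generated modules amounts to self-injectivity together with the
Kasch property, that every maximal ideal is the annihilator of an element; in an artinian ring the
latter is automatic, since its maximal ideals are associated primes.

If all finitely generated modules are torsion-less, a functional not vanishing at `1 : R ⧸ 𝔪` shows
that `𝔪` is an annihilator. To extend `f : I → R` to `R`, it suffices to split the map from `R` into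
the pushout `P` of `f` and the inclusion `I → R`. Let `x` be the image of `1` under this map. The
values at `x` of the functionals on `P` form an ideal; were it contained in a maximal ideal
`𝔪 = ann s`, all functionals would kill `s • x ≠ 0`. So some functional takes the value `1` at `x`,
and it is a splitting.

Conversely, if `x ≠ 0`, choose a maximal ideal `𝔪 = ann s` containing `ann x`. As `R` is injective,
the map `R x → R`, `x ↦ s`, extends to a functional, which does not vanish at `x`.
-/

theorem dual_eval_injective_iff {R M : Type*} [CommSemiring R] [AddCommGroup M] [Module R M] :
    Function.Injective (Module.Dual.eval R M) ↔
      ∀ x : M, (∀ φ : Module.Dual R M, φ x = 0) → x = 0 := by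
  simp only [injective_iff_map_eq_zero, LinearMap.ext_iff, Module.Dual.eval_apply,
    LinearMap.zero_apply]

theorem exists_linearMap_apply_eq_of_torsionOf_le {R Q M : Type*} [Ring R]
    [AddCommGroup Q] [Module R Q] [AddCommGroup M] [Module R M] (hQ : Module.Baer R Q)
    {x : M} {y : Q} (h : Ideal.torsionOf R M x ≤ Ideal.torsionOf R Q y) :
    ∃ φ : M →ₗ[R] Q, φ x = y := by
  let i : (R ⧸ Ideal.torsionOf R M x) →ₗ[R] M :=
    Submodule.liftQ _ (LinearMap.toSpanSingleton R M x) le_rfl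
  let g : (R ⧸ Ideal.torsionOf R M x) →ₗ[R] Q :=
    Submodule.liftQ _ (LinearMap.toSpanSingleton R Q y) h
  have hi : Function.Injective i :=
    LinearMap.ker_eq_bot.1 (Submodule.ker_liftQ_eq_bot _ _ _ le_rfl)
  obtain ⟨φ, hφ⟩ := hQ.extension_property i hi g
  refine ⟨φ, ?_⟩
  calc φ x = φ (i (Submodule.Quotient.mk 1)) := congrArg φ (one_smul R x).symm
    _ = g (Submodule.Quotient.mk 1) := LinearMap.congr_fun hφ _
    _ = y := one_smul R y

theorem baer_of_forall_exists_retraction {R : Type u} {Q : Type v} [Ring R] [AddCommGroup Q]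
    [Module R Q] [Module.Finite R Q]
    (H : ∀ (P : Type max u v) [AddCommGroup P] [Module R P] [Module.Finite R P] (i : Q →ₗ[R] P),
      Function.Injective i → ∃ ρ : P →ₗ[R] Q, ρ ∘ₗ i = LinearMap.id) :
    Module.Baer R Q := by
  intro I f
  let N : Submodule R (R × Q) := LinearMap.range (I.subtype.prod (-f))
  let i : Q →ₗ[R] (R × Q) ⧸ N := N.mkQ ∘ₗ LinearMap.inr R R Q
  have hi : Function.Injective i := by
    refine (injective_iff_map_eq_zero i).2 fun q hq => ?_
    obtain ⟨a, ha⟩ : (0, q) ∈ N := (Submodule.Quotient.mk_eq_zero N).1 hq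
    obtain ⟨ha₁, ha₂⟩ : (a : R) = 0 ∧ -f a = q := Prod.ext_iff.1 ha
    rw [← ha₂, ZeroMemClass.coe_eq_zero.1 ha₁, map_zero, neg_zero]
  have glue (a : I) : N.mkQ (a, 0) = i (f a) :=
    (Submodule.Quotient.eq N).2 ⟨a, by simp⟩
  obtain ⟨ρ, hρ⟩ := H _ i hi
  refine ⟨ρ ∘ₗ N.mkQ ∘ₗ LinearMap.inl R R Q, fun a ha => ?_⟩
  calc ρ (N.mkQ (a, 0)) = ρ (i (f ⟨a, ha⟩)) := congrArg ρ (glue ⟨a, ha⟩)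
    _ = f ⟨a, ha⟩ := LinearMap.congr_fun hρ _

/-- A commutative ring is a Kasch ring if every simple module embeds in it. The simple modules are
the quotients `R ⧸ 𝔪` by maximal ideals, and `R ⧸ 𝔪` embeds in `R` exactly when `𝔪` is the
annihilator `Ideal.torsionOf R R s` of an element `s`; this is the form used here. -/
def IsKasch (R : Type*) [CommRing R] : Prop :=
  ∀ 𝔪 : Ideal R, 𝔪.IsMaximal → ∃ s : R, Ideal.torsionOf R R s = 𝔪

namespace IsKasch

theorem of_isNoetherianRing (R : Type*) [CommRing R] [IsNoetherianRing R] [IsFractionRing R R] :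
    IsKasch R := by
  intro 𝔪 h𝔪
  obtain ⟨-, s, hs⟩ := isAssociatedPrime_iff.1 h𝔪.mem_associatedPrimes_of_isFractionRing
  refine ⟨s, Ideal.ext fun a => ?_⟩
  rw [hs, Ideal.mem_torsionOf_iff, Submodule.mem_colon_singleton, Submodule.mem_bot]

theorem of_isArtinianRing (R : Type*) [CommRing R] [IsArtinianRing R] : IsKasch R :=
  have : IsFractionRing R R := IsFractionRing.self_iff_nonZeroDivisors_le_isUnit.2 fun _ =>
    IsArtinianRing.isUnit_of_mem_nonZeroDivisors
  .of_isNoetherianRing R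

theorem of_dual_eval_injective {R : Type*} [CommRing R]
    (H : ∀ 𝔪 : Ideal R, 𝔪.IsMaximal → Function.Injective (Module.Dual.eval R (R ⧸ 𝔪))) :
    IsKasch R := by
  intro 𝔪 h𝔪
  have hone : (1 : R ⧸ 𝔪) ≠ 0 :=
    mt (Ideal.Quotient.eq_zero_iff_mem (I := 𝔪)).1 ((Ideal.ne_top_iff_one 𝔪).1 h𝔪.ne_top)
  obtain ⟨φ, hφ⟩ : ∃ φ : Module.Dual R (R ⧸ 𝔪), φ 1 ≠ 0 := by
    contrapose! hone
    exact dual_eval_injective_iff.1 (H 𝔪 h𝔪) 1 hone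
  have hle : 𝔪 ≤ Ideal.torsionOf R R (φ 1) := fun a ha => by
    have ha1 : a • (1 : R ⧸ 𝔪) = 0 := by
      rw [Algebra.smul_def, mul_one]
      exact Ideal.Quotient.eq_zero_iff_mem.2 ha
    rw [Ideal.mem_torsionOf_iff, ← map_smul, ha1, map_zero]
  exact ⟨φ 1, (h𝔪.eq_of_le (mt (Ideal.torsionOf_eq_top_iff R _).1 hφ) hle).symm⟩

variable {R : Type*} [CommRing R] {M : Type*} [AddCommGroup M] [Module R M]

theorem exists_dual_apply_eq_one (hR : IsKasch R)
    (hM : Function.Injective (Module.Dual.eval R M)) {x : M} (hx : Ideal.torsionOf R M x = ⊥) :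
    ∃ φ : Module.Dual R M, φ x = 1 := by
  let J : Ideal R := LinearMap.range (Module.Dual.eval R M x)
  suffices hJ : J = ⊤ from (Ideal.eq_top_iff_one J).1 hJ
  by_contra hJ
  obtain ⟨𝔪, h𝔪, hJ𝔪⟩ := J.exists_le_maximal hJ
  obtain ⟨s, rfl⟩ := hR 𝔪 h𝔪
  have hsx : s • x = 0 := dual_eval_injective_iff.1 hM _ fun φ => by
    rw [map_smul, smul_eq_mul, mul_comm]
    exact hJ𝔪 ⟨φ, rfl⟩
  have hs : s = 0 := by
    rwa [← Ideal.mem_torsionOf_iff, hx, Ideal.mem_bot] at hsx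
  exact h𝔪.ne_top ((Ideal.torsionOf_eq_top_iff R s).2 hs)

theorem dual_eval_injective (hR : IsKasch R) (hinj : Module.Baer R R) :
    Function.Injective (Module.Dual.eval R M) := by
  refine dual_eval_injective_iff.2 fun x hx => ?_
  by_contra hx0
  obtain ⟨𝔪, h𝔪, hx𝔪⟩ := Ideal.exists_le_maximal _ (mt (Ideal.torsionOf_eq_top_iff R x).1 hx0)
  obtain ⟨s, rfl⟩ := hR 𝔪 h𝔪
  obtain ⟨φ, rfl⟩ := exists_linearMap_apply_eq_of_torsionOf_le hinj hx𝔪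
  exact h𝔪.ne_top ((Ideal.torsionOf_eq_top_iff R _).2 (hx φ))

end IsKasch

theorem baer_self_of_dual_eval_injective {R : Type u} [CommRing R]
    (H : ∀ (M : Type u) [AddCommGroup M] [Module R M], Module.Finite R M →
      Function.Injective (Module.Dual.eval R M)) : Module.Baer R R := by
  have hR : IsKasch R := .of_dual_eval_injective fun 𝔪 _ => H (R ⧸ 𝔪) inferInstance
  refine baer_of_forall_exists_retraction fun P _ _ hP i hi => ?_
  have hi1 : Ideal.torsionOf R P (i 1) = ⊥ := by
    refine (Submodule.eq_bot_iff _).2 fun a ha => hi ?_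
    simpa [← map_smul] using ha
  obtain ⟨ρ, hρ⟩ := hR.exists_dual_apply_eq_one (H P hP) hi1
  exact ⟨ρ, LinearMap.ext_ring hρ⟩

theorem stmt2_general (R : Type u) [CommRing R] :
    (∀ (M : Type u) [AddCommGroup M] [Module R M], Module.Finite R M →
      Function.Injective (Module.Dual.eval R M)) ↔ Module.Injective R R ∧ IsKasch R := by
  refine ⟨fun H => ⟨(baer_self_of_dual_eval_injective H).injective, ?_⟩, ?_⟩
  · exact .of_dual_eval_injective fun 𝔪 _ => H (R ⧸ 𝔪) inferInstance
  · rintro ⟨hinj, hR⟩ M _ _ -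
    exact hR.dual_eval_injective (Module.Baer.of_injective hinj)

/-- Let `(R,𝔪)` be an artinian local ring. Then every finitely generated
`R`-module is torsion-less (the evaluation map `M → M**` is injective) if and only if `R`
is injective as a module over itself (i.e. `R` is Gorenstein of dimension zero). -/
theorem stmt2 (R : Type u) [CommRing R] [IsArtinianRing R] [IsLocalRing R] :
    (∀ (M : Type u) [AddCommGroup M] [Module R M], Module.Finite R M →
      Function.Injective (Module.Dual.eval R M)) ↔ Module.Injective R R :=
  (stmt2_general R).trans (and_iff_left (.of_isArtinianRing R))
end

section
/- Let k be a field and let R = k[X,Y]/(X,Y)², the quotient of the polynomial ring in two variables by the square of the ideal generated by the variables. Then every reflexive R-module is finitely generated and free. -/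
/-- The ring `R = k[X,Y]/(X,Y)²`. -/
abbrev LamRing (k : Type u) [Field k] : Type u :=
  MvPolynomial (Fin 2) k ⧸
    ((Ideal.span {MvPolynomial.X 0, MvPolynomial.X 1} :
      Ideal (MvPolynomial (Fin 2) k)) ^ 2)

/-!
The ring `R` is local, and its maximal ideal `𝔪` is not principal and has square zero. Let `κ` be
the residue field. Since `𝔪` kills itself, the product of `c ∈ 𝔪` with a functional `M → κ` is an
element of `M*`, and its product with a functional `M* → κ` is an element of `M**`. Choose
`α : 𝔪 → κ` and nonzero `x, y ∈ 𝔪` with `α x = 1` and `α y = 0`.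

Given `l : M → κ`, suppose `φ : M* → κ` kills `y l`. If the bidual element `x φ` is evaluation at
`u`, then `y l(u) = 0`, so `l(u) = 0` and `φ (x l) = 0`. Hence `x l ∈ 𝔪 M* + R y l`, say
`x l - a y l ∈ 𝔪 M*`, and applying `α` to its values in `𝔪` lifts `l` to a functional `M → R`. Thus
every functional on `κ ⊗ M` lifts to `M*`. Through `Φ ↦ x Φ` every functional on `(κ ⊗ M)*` then
comes from a point of `κ ⊗ M`, so `κ ⊗ M` has finite dimension and `M` is finitely generated.
Lifting the coordinates on `κ ⊗ M` embeds `M` as a direct summand of a free module.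
-/

open IsLocalRing Module TensorProduct

section Nilpotent

variable {R : Type*} [CommRing R]

theorem eq_top_of_sup_smul_top_eq_top_of_isNilpotent {M : Type*} [AddCommGroup M] [Module R M]
    {I : Ideal R} (hI : IsNilpotent I) {N : Submodule R M} (hN : N ⊔ I • ⊤ = ⊤) : N = ⊤ := by
  have sup_pow_smul_top (n : ℕ) : N ⊔ I ^ n • ⊤ = ⊤ := by
    induction n with
    | zero => simp
    | succ n ih =>
      have smul_top_le : I • ⊤ ≤ N ⊔ I ^ (n + 1) • ⊤ := calc
        I • ⊤ = I • (N ⊔ I ^ n • ⊤) := by rw [ih]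
        _ = I • N ⊔ I ^ (n + 1) • ⊤ := by
          rw [Submodule.smul_sup, pow_succ', Submodule.mul_smul]
        _ ≤ N ⊔ I ^ (n + 1) • ⊤ := sup_le_sup_right Submodule.smul_le_right _
      exact top_le_iff.1 (hN.ge.trans (sup_le le_sup_left smul_top_le))
  obtain ⟨n, hn⟩ := hI
  simpa [hn] using sup_pow_smul_top n

theorem isLocalRing_of_isMaximal_of_isNilpotent {I : Ideal R} (hmax : I.IsMaximal)
    (hI : IsNilpotent I) : IsLocalRing R := by
  obtain ⟨n, hn⟩ := hI
  refine .of_unique_max_ideal ⟨I, hmax, fun J hJ => ?_⟩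
  exact (hmax.eq_of_le hJ.ne_top (hJ.isPrime.le_of_pow_le (hn.trans_le bot_le))).symm

theorem isMaximal_cotangentIdeal {I : Ideal R} (hI : I.IsMaximal) : I.cotangentIdeal.IsMaximal :=
  Ideal.Quotient.maximal_of_isField _ <|
    I.quotCotangent.toMulEquiv.isField <| (Ideal.Quotient.maximal_ideal_iff_isField_quotient I).1 hI

end Nilpotent

section ResidueField

variable {R M N : Type*} [CommRing R] [IsLocalRing R] [AddCommGroup M] [Module R M]
  [AddCommGroup N] [Module R N]

local notation "𝔪" => maximalIdeal R
local notation "κ" => ResidueField R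

theorem one_tmul_residueField_eq_zero_iff {x : M} :
    (1 : κ) ⊗ₜ[R] x = 0 ↔ x ∈ 𝔪 • (⊤ : Submodule R M) := by
  rw [← LinearMap.ker_tensorProductMk]
  rfl

theorem exists_linearMap_residueField_of_notMem {S : Submodule R M} (hS : 𝔪 • ⊤ ≤ S) {x : M}
    (hx : x ∉ S) : ∃ l : M →ₗ[R] κ, S ≤ LinearMap.ker l ∧ l x = 1 := by
  have hx' : (1 : κ) ⊗ₜ[R] S.mkQ x ≠ 0 := by
    have : 𝔪 • (⊤ : Submodule R (M ⧸ S)) = ⊥ := by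
      rw [← S.range_mkQ, ← Submodule.map_top, ← Submodule.map_smul'', ← le_bot_iff,
        Submodule.map_le_iff_le_comap]
      simpa using hS
    simpa [one_tmul_residueField_eq_zero_iff, this] using hx
  obtain ⟨ψ, hψ⟩ := Projective.exists_dual_eq_one κ hx'
  refine ⟨ψ.restrictScalars R ∘ₗ TensorProduct.mk R κ (M ⧸ S) 1 ∘ₗ S.mkQ, fun s hs => ?_, hψ⟩
  simp [(Submodule.Quotient.mk_eq_zero S).2 hs]

theorem finite_of_finite_residueField_tensorProduct (h𝔪 : IsNilpotent 𝔪)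
    [Module.Finite κ (κ ⊗[R] M)] : Module.Finite R M := by
  let b := finBasis κ (κ ⊗[R] M)
  obtain ⟨e, he : TensorProduct.mk R κ M 1 ∘ e = b⟩ :=
    (TensorProduct.mk_surjective R M κ residue_surjective).comp_left b
  have map_span_eq_top :
      (Submodule.span R (Set.range e)).map (TensorProduct.mk R κ M 1) = ⊤ := by
    rw [Submodule.map_span, ← Set.range_comp, he,
      ← Submodule.restrictScalars_span R κ residue_surjective, b.span_eq,
      Submodule.restrictScalars_top]
  have span_sup_eq_top : Submodule.span R (Set.range e) ⊔ 𝔪 • ⊤ = ⊤ := by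
    rw [← LinearMap.ker_tensorProductMk, ← Submodule.comap_top (TensorProduct.mk R κ M 1),
      ← map_span_eq_top]
    exact (Submodule.comap_map_eq _ _).symm
  have span_eq_top := eq_top_of_sup_smul_top_eq_top_of_isNilpotent h𝔪 span_sup_eq_top
  exact ⟨span_eq_top ▸ Submodule.fg_span (Set.finite_range e)⟩

theorem free_of_surjective_dual_baseChange [Module.Finite R M]
    (h : Function.Surjective (Dual.baseChange κ : Dual R M → Dual κ (κ ⊗[R] M))) :
    Module.Free R M := by
  let b := finBasis κ (κ ⊗[R] M)
  choose f hf using fun i => h (b.coord i)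
  have injective_lTensor_pi : Function.Injective ((LinearMap.pi f).lTensor κ) := by
    have coord_eq (i) : (b.coord i).restrictScalars R =
        (Dual.baseChange κ (LinearMap.proj i)).restrictScalars R ∘ₗ (LinearMap.pi f).lTensor κ := by
      rw [← hf i]
      ext a m
      simp
    refine fun v w hvw => b.ext_elem fun i => ?_
    calc b.coord i v = Dual.baseChange κ (LinearMap.proj i) ((LinearMap.pi f).lTensor κ v) :=
          LinearMap.congr_fun (coord_eq i) v
      _ = Dual.baseChange κ (LinearMap.proj i) ((LinearMap.pi f).lTensor κ w) := by rw [hvw]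
      _ = b.coord i w := (LinearMap.congr_fun (coord_eq i) w).symm
  obtain ⟨s, hs⟩ := (split_injective_iff_lTensor_residueField_injective _).2 injective_lTensor_pi
  have := Projective.of_split _ _ hs
  exact free_of_flat_of_isLocalRing

/-- The homomorphism `κ → N` sending the class of `a` to `a • c`, for a module `N` killed by `𝔪`. -/
noncomputable def socleHom (hN : IsTorsionBySet R N 𝔪) (c : N) : κ →ₗ[R] N :=
  Submodule.liftQ 𝔪 (LinearMap.toSpanSingleton R N c) fun a ha => @hN c ⟨a, ha⟩

theorem socleHom_residue (hN : IsTorsionBySet R N 𝔪) (c : N) (a : R) :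
    socleHom hN c (residue R a) = a • c :=
  rfl

theorem map_socleHom (hN : IsTorsionBySet R N 𝔪) (c : N) (α : N →ₗ[R] κ) (t : κ) :
    α (socleHom hN c t) = t * α c := by
  obtain ⟨a, rfl⟩ := residue_surjective t
  rw [socleHom_residue, map_smul, Algebra.smul_def]
  rfl

theorem socleHom_injective (hN : IsTorsionBySet R N 𝔪) {c : N} (hc : c ≠ 0) :
    Function.Injective (socleHom hN c) := by
  rw [injective_iff_map_eq_zero]
  intro t ht
  obtain ⟨a, rfl⟩ := residue_surjective t
  rw [residue_eq_zero_iff]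
  by_contra ha
  exact hc ((IsUnit.smul_eq_zero (notMem_maximalIdeal.1 ha)).1 ht)

/-- The functional `c · l : M → 𝔪 ⊆ R` obtained from `l : M → κ` by multiplication with `c ∈ 𝔪`,
which makes sense since `𝔪` is killed by `𝔪`. -/
noncomputable def socleDual (h𝔪 : IsTorsionBySet R 𝔪 𝔪) (c : 𝔪) (l : M →ₗ[R] κ) : Dual R M :=
  Submodule.subtype 𝔪 ∘ₗ socleHom h𝔪 c ∘ₗ l

theorem socleDual_apply (h𝔪 : IsTorsionBySet R 𝔪 𝔪) (c : 𝔪) (l : M →ₗ[R] κ) (m : M) :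
    socleDual h𝔪 c l m = socleHom h𝔪 c (l m) :=
  rfl

-- Lift `z` to `𝔪 ⊗ M`; then `w` represents the image of the lift under `α ⊗ id : 𝔪 ⊗ M → κ ⊗ M`.
theorem exists_forall_dual_eq_and_map_eq_residue (α : 𝔪 →ₗ[R] κ) {z : M}
    (hz : z ∈ 𝔪 • (⊤ : Submodule R M)) :
    ∃ w : M, ∀ f : Dual R M, ∃ c : 𝔪, c = f z ∧ α c = residue R (f w) := by
  refine Submodule.smul_induction_on hz (fun r hr m _ => ?_) fun z₁ z₂ h₁ h₂ => ?_
  · obtain ⟨a, ha⟩ := residue_surjective (α ⟨r, hr⟩)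
    refine ⟨a • m, fun f => ⟨f m • ⟨r, hr⟩, by simp [mul_comm], ?_⟩⟩
    rw [map_smul, ← ha, map_smul, smul_eq_mul, mul_comm, map_mul]
    rfl
  · obtain ⟨w₁, hw₁⟩ := h₁
    obtain ⟨w₂, hw₂⟩ := h₂
    refine ⟨w₁ + w₂, fun f => ?_⟩
    obtain ⟨c₁, hc₁, hα₁⟩ := hw₁ f
    obtain ⟨c₂, hc₂, hα₂⟩ := hw₂ f
    exact ⟨c₁ + c₂, by simp [hc₁, hc₂], by simp [hα₁, hα₂]⟩

theorem exists_apply_eq_one_apply_eq_zero_of_not_isPrincipal (h𝔪 : IsTorsionBySet R 𝔪 𝔪)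
    (hp : ¬ (𝔪).IsPrincipal) :
    ∃ (α : 𝔪 →ₗ[R] κ) (x y : 𝔪), y ≠ 0 ∧ α x = 1 ∧ α y = 0 := by
  obtain ⟨y, hy⟩ : ∃ y : 𝔪, y ≠ 0 := by
    by_contra! h
    exact hp <| ((Submodule.eq_bot_iff _).2 fun y hy => congrArg Subtype.val (h ⟨y, hy⟩)) ▸
      bot_isPrincipal
  obtain ⟨x, hx⟩ : ∃ x : 𝔪, x ∉ Submodule.span R {y} := by
    by_contra! h
    refine hp ⟨y, le_antisymm (fun x hx => ?_) (by simp)⟩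
    obtain ⟨a, ha⟩ := Submodule.mem_span_singleton.1 (h ⟨x, hx⟩)
    exact Submodule.mem_span_singleton.2 ⟨a, congrArg Subtype.val ha⟩
  obtain ⟨α, hα, hαx⟩ := exists_linearMap_residueField_of_notMem
    (Submodule.smul_le.2 fun r hr m _ => by simp [show r • m = 0 from @h𝔪 m ⟨r, hr⟩]) hx
  exact ⟨α, x, y, hy, hαx, hα (Submodule.mem_span_singleton_self y)⟩

theorem exists_forall_dual_apply_eq_socleHom (hM : Function.Surjective (Dual.eval R M))
    (h𝔪 : IsTorsionBySet R 𝔪 𝔪) (c : 𝔪) (φ : Dual R M →ₗ[R] κ) :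
    ∃ u : M, ∀ f : Dual R M, f u = socleHom h𝔪 c (φ f) := by
  obtain ⟨u, hu⟩ := hM (socleDual h𝔪 c φ)
  exact ⟨u, LinearMap.congr_fun hu⟩

theorem apply_socleDual_eq_zero_of_surjective_eval (hM : Function.Surjective (Dual.eval R M))
    (h𝔪 : IsTorsionBySet R 𝔪 𝔪) {x y : 𝔪} (hx : x ≠ 0) (hy : y ≠ 0) {l : M →ₗ[R] κ}
    {φ : Dual R M →ₗ[R] κ} (hφ : φ (socleDual h𝔪 y l) = 0) : φ (socleDual h𝔪 x l) = 0 := by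
  obtain ⟨u, hu⟩ := exists_forall_dual_apply_eq_socleHom hM h𝔪 x φ
  have l_u_eq_zero : l u = 0 := by
    apply socleHom_injective h𝔪 hy
    simpa [hφ, socleDual_apply] using hu (socleDual h𝔪 y l)
  apply socleHom_injective h𝔪 hx
  simpa [l_u_eq_zero, socleDual_apply] using (hu (socleDual h𝔪 x l)).symm

theorem socleDual_mem_sup_span (hM : Function.Surjective (Dual.eval R M))
    (h𝔪 : IsTorsionBySet R 𝔪 𝔪) {x y : 𝔪} (hx : x ≠ 0) (hy : y ≠ 0) (l : M →ₗ[R] κ) :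
    socleDual h𝔪 x l ∈ 𝔪 • ⊤ ⊔ Submodule.span R {socleDual h𝔪 y l} := by
  by_contra hxl
  obtain ⟨φ, hφ, hφx⟩ := exists_linearMap_residueField_of_notMem le_sup_left hxl
  have hφy : φ (socleDual h𝔪 y l) = 0 :=
    hφ (Submodule.mem_sup_right (Submodule.mem_span_singleton_self _))
  exact one_ne_zero (hφx.symm.trans
    (apply_socleDual_eq_zero_of_surjective_eval hM h𝔪 hx hy hφy))

theorem exists_dual_residue_eq_of_surjective_eval (hM : Function.Surjective (Dual.eval R M))
    (h𝔪 : IsTorsionBySet R 𝔪 𝔪) (hp : ¬ (𝔪).IsPrincipal) (l : M →ₗ[R] κ) :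
    ∃ f : Dual R M, ∀ m, residue R (f m) = l m := by
  obtain ⟨α, x, y, hy, hαx, hαy⟩ := exists_apply_eq_one_apply_eq_zero_of_not_isPrincipal h𝔪 hp
  have hx : x ≠ 0 := by
    rintro rfl
    simp at hαx
  obtain ⟨z, hz, v, hv, hzv⟩ := Submodule.mem_sup.1 (socleDual_mem_sup_span hM h𝔪 hx hy l)
  obtain ⟨a, rfl⟩ := Submodule.mem_span_singleton.1 hv
  obtain ⟨f, hf⟩ := exists_forall_dual_eq_and_map_eq_residue α hz
  refine ⟨f, fun m => ?_⟩
  obtain ⟨c, hc, hαc⟩ := hf (Dual.eval R M m)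
  have c_eq : c = socleHom h𝔪 x (l m) - a • socleHom h𝔪 y (l m) :=
    Subtype.ext (hc.trans (eq_sub_of_add_eq (LinearMap.congr_fun hzv m)))
  calc residue R (f m) = α c := hαc.symm
    _ = l m * α x - a • (l m * α y) := by
      rw [c_eq, map_sub, map_smul, map_socleHom, map_socleHom]
    _ = l m := by simp [hαx, hαy]

theorem surjective_dual_baseChange_of_surjective_eval (hM : Function.Surjective (Dual.eval R M))
    (h𝔪 : IsTorsionBySet R 𝔪 𝔪) (hp : ¬ (𝔪).IsPrincipal) :
    Function.Surjective (Dual.baseChange κ : Dual R M → Dual κ (κ ⊗[R] M)) := by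
  intro ψ
  obtain ⟨f, hf⟩ := exists_dual_residue_eq_of_surjective_eval hM h𝔪 hp
    (ψ.restrictScalars R ∘ₗ TensorProduct.mk R κ M 1)
  refine ⟨f, ?_⟩
  ext m
  simpa [Algebra.smul_def] using hf m

theorem mem_smul_top_of_forall_dual_mem
    (h : Function.Surjective (Dual.baseChange κ : Dual R M → Dual κ (κ ⊗[R] M))) {u : M}
    (hu : ∀ f : Dual R M, f u ∈ 𝔪) : u ∈ 𝔪 • (⊤ : Submodule R M) := by
  rw [← one_tmul_residueField_eq_zero_iff, ← forall_dual_apply_eq_zero_iff κ]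
  intro ψ
  obtain ⟨f, rfl⟩ := h ψ
  rw [Dual.baseChange_apply_tmul, Algebra.smul_def, mul_one]
  exact (residue_eq_zero_iff _).2 (hu f)

theorem finite_residueField_tensorProduct_of_surjective_eval
    (hM : Function.Surjective (Dual.eval R M)) (h𝔪 : IsTorsionBySet R 𝔪 𝔪)
    (hp : ¬ (𝔪).IsPrincipal) :
    Module.Finite κ (κ ⊗[R] M) := by
  obtain ⟨α, x, -, -, hαx, -⟩ := exists_apply_eq_one_apply_eq_zero_of_not_isPrincipal h𝔪 hp
  have h := surjective_dual_baseChange_of_surjective_eval hM h𝔪 hp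
  have surjective_eval : Function.Surjective (Dual.eval κ (κ ⊗[R] M)) := by
    intro Φ
    obtain ⟨u, hu⟩ := exists_forall_dual_apply_eq_socleHom hM h𝔪 x
      (Φ.restrictScalars R ∘ₗ Dual.baseChange κ)
    have u_mem : u ∈ 𝔪 • (⊤ : Submodule R M) :=
      mem_smul_top_of_forall_dual_mem h fun f => hu f ▸ SetLike.coe_mem _
    obtain ⟨w, hw⟩ := exists_forall_dual_eq_and_map_eq_residue α u_mem
    refine ⟨1 ⊗ₜ w, LinearMap.ext fun ψ => ?_⟩
    obtain ⟨f, rfl⟩ := h ψ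
    obtain ⟨c, hc, hαc⟩ := hw f
    have c_eq : c = socleHom h𝔪 x (Φ (Dual.baseChange κ f)) := Subtype.ext (hc.trans (hu f))
    calc Dual.eval κ _ (1 ⊗ₜ w) (Dual.baseChange κ f) = residue R (f w) := by
          simp [Algebra.smul_def]
      _ = Φ (Dual.baseChange κ f) := by
          rw [← hαc, c_eq, map_socleHom, hαx, mul_one]
  have : IsReflexive κ (κ ⊗[R] M) := ⟨eval_apply_injective κ, surjective_eval⟩
  infer_instance

end ResidueField

theorem stmt3_general {R M : Type*} [CommRing R] [IsLocalRing R] [AddCommGroup M] [Module R M]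
    (h𝔪 : maximalIdeal R ^ 2 = ⊥) (hp : ¬ (maximalIdeal R).IsPrincipal)
    (hM : Function.Surjective (Dual.eval R M)) : Module.Finite R M ∧ Module.Free R M := by
  have torsion : IsTorsionBySet R (maximalIdeal R) (maximalIdeal R) := fun c a =>
    Subtype.ext <| (Submodule.mem_bot R).1 <| h𝔪 ▸ pow_two (maximalIdeal R) ▸
      Ideal.mul_mem_mul a.2 c.2
  have := finite_residueField_tensorProduct_of_surjective_eval hM torsion hp
  have : Module.Finite R M := finite_of_finite_residueField_tensorProduct ⟨2, h𝔪⟩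
  exact ⟨this, free_of_surjective_dual_baseChange
    (surjective_dual_baseChange_of_surjective_eval hM torsion hp)⟩

section IdealOfVars

open MvPolynomial

variable {σ K : Type*} [CommRing K]

theorem mem_idealOfVars_iff {p : MvPolynomial σ K} :
    p ∈ idealOfVars σ K ↔ constantCoeff p = 0 := by
  rw [← pow_one (idealOfVars σ K), mem_pow_idealOfVars_iff']
  simp [constantCoeff_eq, Finsupp.degree_eq_zero_iff]

theorem isMaximal_idealOfVars {k : Type*} [Field k] : (idealOfVars σ k).IsMaximal := by
  have : idealOfVars σ k = RingHom.ker (constantCoeff (σ := σ) (R := k)) :=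
    Ideal.ext fun p => mem_idealOfVars_iff
  rw [this]
  exact RingHom.ker_isMaximal_of_surjective _ fun a => ⟨C a, constantCoeff_C σ a⟩

theorem coeff_single_eq_zero_of_mem_idealOfVars_sq {p : MvPolynomial σ K}
    (hp : p ∈ idealOfVars σ K ^ 2) (i : σ) : p.coeff (Finsupp.single i 1) = 0 :=
  (mem_pow_idealOfVars_iff' 2 p).1 hp _ (by simp)

theorem coeff_single_mul_of_mem_idealOfVars {p : MvPolynomial σ K} (hp : p ∈ idealOfVars σ K)
    (a : MvPolynomial σ K) (i : σ) :
    (p * a).coeff (Finsupp.single i 1) = p.coeff (Finsupp.single i 1) * constantCoeff a := by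
  have mul_sub_mem : p * (a - C (constantCoeff a)) ∈ idealOfVars σ K ^ 2 :=
    pow_two (idealOfVars σ K) ▸ Ideal.mul_mem_mul hp (mem_idealOfVars_iff.2 (by simp))
  have := coeff_single_eq_zero_of_mem_idealOfVars_sq mul_sub_mem i
  rwa [mul_sub, coeff_sub, mul_comm p (C _), coeff_C_mul, mul_comm _ (coeff _ p),
    sub_eq_zero] at this

theorem exists_coeff_single_eq_mul_of_mk_mem_span {p q : MvPolynomial σ K}
    (hp : p ∈ idealOfVars σ K) (hq : Ideal.Quotient.mk (idealOfVars σ K ^ 2) q ∈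
      Ideal.span {Ideal.Quotient.mk (idealOfVars σ K ^ 2) p}) :
    ∃ t : K, ∀ i, q.coeff (Finsupp.single i 1) = p.coeff (Finsupp.single i 1) * t := by
  obtain ⟨b, hb⟩ := Ideal.mem_span_singleton'.1 hq
  obtain ⟨a, rfl⟩ := Ideal.Quotient.mk_surjective b
  have sub_mul_mem : q - p * a ∈ idealOfVars σ K ^ 2 := by
    rw [← Ideal.Quotient.mk_eq_mk_iff_sub_mem, map_mul, mul_comm, hb]
  refine ⟨constantCoeff a, fun i => ?_⟩
  rw [← coeff_single_mul_of_mem_idealOfVars hp, ← sub_eq_zero, ← coeff_sub]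
  exact coeff_single_eq_zero_of_mem_idealOfVars_sq sub_mul_mem i

theorem not_isPrincipal_cotangentIdeal_idealOfVars [Nontrivial σ] [Nontrivial K] :
    ¬ (idealOfVars σ K).cotangentIdeal.IsPrincipal := by
  classical
  rintro ⟨g, hg⟩
  obtain ⟨p, rfl⟩ := Ideal.Quotient.mk_surjective g
  have hp : p ∈ idealOfVars σ K :=
    Ideal.mk_mem_cotangentIdeal.1 (hg ▸ Submodule.mem_span_singleton_self _)
  have exists_coeff_X_eq (i : σ) : ∃ t : K, ∀ j,
      (X i : MvPolynomial σ K).coeff (Finsupp.single j 1) = p.coeff (Finsupp.single j 1) * t :=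
    exists_coeff_single_eq_mul_of_mk_mem_span hp <| (SetLike.ext_iff.1 hg _).1 <|
      Ideal.mk_mem_cotangentIdeal.2 (Ideal.subset_span (Set.mem_range_self i))
  obtain ⟨i, j, hij⟩ := exists_pair_ne σ
  obtain ⟨s, hs⟩ := exists_coeff_X_eq i
  obtain ⟨t, ht⟩ := exists_coeff_X_eq j
  have hsi : 1 = p.coeff (.single i 1) * s := by simpa [coeff_X] using hs i
  have hsj : 0 = p.coeff (.single j 1) * s := by
    simpa [coeff_X, Finsupp.single_left_inj, hij] using hs j
  have htj : 1 = p.coeff (.single j 1) * t := by simpa [coeff_X] using ht j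
  apply one_ne_zero (α := K)
  calc (1 : K) = (p.coeff (.single i 1) * s) * (p.coeff (.single j 1) * t) := by
        rw [← hsi, ← htj, one_mul]
    _ = (p.coeff (.single j 1) * s) * (p.coeff (.single i 1) * t) := by ring
    _ = 0 := by rw [← hsj, zero_mul]

theorem span_X_pair_eq_idealOfVars :
    Ideal.span {X 0, X 1} = idealOfVars (Fin 2) K := by
  rw [idealOfVars]
  congr 1
  ext
  simp [Fin.exists_fin_two, eq_comm]

end IdealOfVars

/-- Let `k` be a field and `R = k[X,Y]/(X,Y)²`. Then every reflexive
`R`-module is finitely generated and free. -/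
theorem stmt3 (k : Type u) [Field k]
    (M : Type u) [AddCommGroup M] [Module (LamRing k) M]
    (h : Module.IsReflexive (LamRing k) M) :
    Module.Finite (LamRing k) M ∧ Module.Free (LamRing k) M := by
  let I : Ideal (MvPolynomial (Fin 2) k) := Ideal.span {MvPolynomial.X 0, MvPolynomial.X 1}
  have hI : I = MvPolynomial.idealOfVars (Fin 2) k := span_X_pair_eq_idealOfVars
  have hmax : I.cotangentIdeal.IsMaximal := isMaximal_cotangentIdeal (hI ▸ isMaximal_idealOfVars)
  have hp : ¬ I.cotangentIdeal.IsPrincipal := by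
    rw [hI]
    exact not_isPrincipal_cotangentIdeal_idealOfVars
  have : IsLocalRing (LamRing k) :=
    isLocalRing_of_isMaximal_of_isNilpotent hmax ⟨2, I.cotangentIdeal_square⟩
  have h𝔪 : I.cotangentIdeal = maximalIdeal (LamRing k) := eq_maximalIdeal hmax
  exact stmt3_general (h𝔪 ▸ I.cotangentIdeal_square) (h𝔪 ▸ hp) (bijective_dual_eval _ M).2
end

section
/- Let (R,𝔪) be a noetherian local ring with 𝔪² = 0 and 𝔪 not generated by a single element. If M is a finitely generated R-module with Ext^i_R(M,R) = 0 for some i ≥ 2, then M is free. -/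
open CategoryTheory

/-!
Over a local ring with `𝔪² = 0`, lifting a basis of `M / 𝔪M` gives a free cover `F → M` (Nakayama's
lemma for the nilpotent ideal `𝔪`), and its kernel `K ⊆ 𝔪F` is killed by `𝔪`. If `K ≠ 0`, then the
residue field `k` is a direct summand of `K`, so `Extⁱ(M, R) = Extⁱ⁻¹(K, R) = 0` forces
`Extⁱ⁻¹(k, R) = 0`. As the syzygy `𝔪` of `k` is again a nonzero `k`-vector space, the degree drops
to `Ext¹(k, R) = 0`, which says that every linear map `𝔪 → R` is multiplication by an element of
`R`. This fails for a map that kills some `x ≠ 0` in `𝔪` and fixes some `y ∈ 𝔪` outside `(x)`.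
-/

section AbelianCategory

variable {C : Type u} [Category.{v} C] [Abelian C] [HasExt.{w} C]

-- `Ext` is a left derived functor, `Abelian.Ext` comes from the derived category; only the latter
-- has long exact sequences in the library.
lemma subsingleton_abelianExt_succ_of_subsingleton_ext (R : Type t) [Ring R] [Linear R C]
    [EnoughProjectives C] (X Y : C) (n : ℕ)
    (h : Subsingleton (((Ext R C (n + 1)).obj (Opposite.op X)).obj Y)) :
    Subsingleton (Abelian.Ext.{w} X Y (n + 1)) := by
  let P := projectiveResolution X
  have hzero : Limits.IsZero ((P.complex.linearYonedaObj R Y).homology (n + 1)) :=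
    .of_iso (ModuleCat.isZero_of_subsingleton _) (P.isoExt (n + 1) Y).symm
  rw [← HomologicalComplex.exactAt_iff_isZero_homology,
    HomologicalComplex.exactAt_iff' _ n (n + 1) (n + 2) (by simp) (by simp),
    ShortComplex.moduleCat_exact_iff] at hzero
  refine subsingleton_of_forall_eq 0 fun α => ?_
  obtain ⟨f, hf, rfl⟩ := P.extMk_surjective α (n + 2) rfl
  exact (P.extMk_eq_zero_iff f (n + 2) rfl hf n rfl).2 (hzero f hf)

lemma subsingleton_ext_of_retract {X X' Y : C} (h : Retract X X') {n : ℕ}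
    (hX' : Subsingleton (Abelian.Ext.{w} X' Y n)) : Subsingleton (Abelian.Ext.{w} X Y n) := by
  refine subsingleton_of_forall_eq 0 fun α => ?_
  calc
    α = (Abelian.Ext.mk₀ h.i).comp ((Abelian.Ext.mk₀ h.r).comp α (zero_add n)) (zero_add n) := by
      rw [Abelian.Ext.mk₀_comp_mk₀_assoc, h.retract, Abelian.Ext.mk₀_id_comp]
    _ = 0 := by
      rw [Subsingleton.elim ((Abelian.Ext.mk₀ h.r).comp α (zero_add n)) 0, Abelian.Ext.comp_zero]

lemma subsingleton_ext_X₁_of_projective_X₂ {S : ShortComplex C} (hS : S.ShortExact)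
    [Projective S.X₂] {Y : C} {n : ℕ} (h : Subsingleton (Abelian.Ext.{w} S.X₃ Y (n + 2))) :
    Subsingleton (Abelian.Ext.{w} S.X₁ Y (n + 1)) := by
  refine subsingleton_of_forall_eq 0 fun α => ?_
  obtain ⟨β, rfl⟩ := Abelian.Ext.contravariant_sequence_exact₁ hS Y α
    (show 1 + (n + 1) = n + 2 by lia) (Subsingleton.elim _ _)
  rw [Abelian.Ext.eq_zero_of_projective β, Abelian.Ext.comp_zero]

lemma exists_f_comp_eq_of_subsingleton_ext_one {S : ShortComplex C} (hS : S.ShortExact) {Y : C}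
    (h : Subsingleton (Abelian.Ext.{w} S.X₃ Y 1)) (f : S.X₁ ⟶ Y) :
    ∃ g : S.X₂ ⟶ Y, S.f ≫ g = f := by
  obtain ⟨β, hβ⟩ := Abelian.Ext.contravariant_sequence_exact₁ hS Y (Abelian.Ext.mk₀ f)
    (add_zero 1) (Subsingleton.elim _ _)
  obtain ⟨g, rfl⟩ := (Abelian.Ext.mk₀_bijective _ _).2 β
  rw [Abelian.Ext.mk₀_comp_mk₀] at hβ
  exact ⟨g, (Abelian.Ext.mk₀_bijective _ _).1 hβ⟩

end AbelianCategory

section Ideal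

variable {R : Type u} [CommRing R] {I : Ideal R}

lemma shortExact_subtype_mkQ {M : Type v} [AddCommGroup M] [Module R M] (N : Submodule R M) :
    (ModuleCat.shortComplexOfCompEqZero N.subtype N.mkQ
      (LinearMap.exact_subtype_mkQ N).linearMap_comp_eq_zero).ShortExact :=
  ModuleCat.shortComplex_shortExact _ (LinearMap.exact_subtype_mkQ N) N.injective_subtype
    N.mkQ_surjective

lemma exists_eq_smul_of_subsingleton_ext_one {N : Type u} [AddCommGroup N] [Module R N]
    (h : Subsingleton (Abelian.Ext.{u} (ModuleCat.of R (R ⧸ I)) (ModuleCat.of R N) 1))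
    (g : I →ₗ[R] N) : ∃ y : N, ∀ z : I, g z = (z : R) • y := by
  obtain ⟨G, hG⟩ :=
    exists_f_comp_eq_of_subsingleton_ext_one (shortExact_subtype_mkQ I) h (ModuleCat.ofHom g)
  refine ⟨G.hom (1 : R), fun z => ?_⟩
  calc
    g z = G.hom (z : R) := (congrArg (fun k => k.hom z) hG).symm
    _ = G.hom ((z : R) • (1 : R)) := by rw [smul_eq_mul, mul_one]
    _ = (z : R) • G.hom (1 : R) := map_smul _ _ _

lemma mul_eq_zero_of_sq_eq_bot (hI : I ^ 2 = ⊥) {a b : R} (ha : a ∈ I) (hb : b ∈ I) :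
    a * b = 0 := by
  rw [← Ideal.mem_bot, ← hI, pow_two]
  exact Ideal.mul_mem_mul ha hb

lemma isTorsionBySet_of_sq_eq_bot (hI : I ^ 2 = ⊥) : Module.IsTorsionBySet R I I :=
  fun z a => Subtype.ext (mul_eq_zero_of_sq_eq_bot hI a.2 z.2)

lemma exists_le_ker_apply_eq_of_notMem [I.IsMaximal] {N L : Type*} [AddCommGroup N] [Module R N]
    [AddCommGroup L] [Module R L] (hN : Module.IsTorsionBySet R N I) {W : Submodule R N} {y : N}
    (hy : y ∉ W) {z : L} (hz : ∀ a ∈ I, a • z = 0) :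
    ∃ g : N →ₗ[R] L, W ≤ LinearMap.ker g ∧ g y = z := by
  let : Field (R ⧸ I) := Ideal.Quotient.field I
  have hNW : Module.IsTorsionBySet R (N ⧸ W) I := hN.quotient W
  let : Module (R ⧸ I) (N ⧸ W) := hNW.module
  obtain ⟨φ, hφ⟩ := Module.Projective.exists_dual_eq_one (R ⧸ I)
    (mt (Submodule.Quotient.mk_eq_zero W).1 hy)
  let ι : (R ⧸ I) →ₗ[R] L := I.liftQ (LinearMap.toSpanSingleton R L z) fun a ha => hz a ha
  have hι : ι 1 = z := one_smul R z
  have : IsScalarTower R (R ⧸ I) (N ⧸ W) := hNW.isScalarTower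
  refine ⟨ι ∘ₗ φ.restrictScalars R ∘ₗ W.mkQ, fun w hw => ?_, ?_⟩
  · simp [(Submodule.Quotient.mk_eq_zero W).2 hw]
  · simp [hφ, hι]

lemma nonempty_retract_quotient [I.IsMaximal] {N : Type u} [AddCommGroup N] [Module R N]
    [Nontrivial N] (hN : Module.IsTorsionBySet R N I) :
    Nonempty (Retract (ModuleCat.of R (R ⧸ I)) (ModuleCat.of R N)) := by
  obtain ⟨x, hx⟩ := exists_ne (0 : N)
  have hI : Module.IsTorsionBySet R (R ⧸ I) I :=
    (Module.isTorsionBySet_quotient_iff I I).2 fun x a ha => I.mul_mem_right x ha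
  obtain ⟨i, -, hi⟩ := exists_le_ker_apply_eq_of_notMem hI (W := ⊥) (y := 1) (by simp)
    (fun a ha => @hN x ⟨a, ha⟩)
  obtain ⟨r, -, hr⟩ := exists_le_ker_apply_eq_of_notMem hN (W := ⊥) (y := x) (by simpa using hx)
    (fun a ha => @hI 1 ⟨a, ha⟩)
  have hri : r ∘ₗ i = LinearMap.id :=
    Submodule.linearMap_qext _ (LinearMap.ext_ring ((congrArg r hi).trans hr))
  exact ⟨⟨ModuleCat.ofHom i, ModuleCat.ofHom r, ModuleCat.hom_ext hri⟩⟩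

lemma subsingleton_ext_quotient_of_isTorsionBySet [I.IsMaximal] {N : Type u} [AddCommGroup N]
    [Module R N] [Nontrivial N] (hN : Module.IsTorsionBySet R N I) {Y : ModuleCat.{u} R} {n : ℕ}
    (h : Subsingleton (Abelian.Ext.{u} (ModuleCat.of R N) Y n)) :
    Subsingleton (Abelian.Ext.{u} (ModuleCat.of R (R ⧸ I)) Y n) :=
  (nonempty_retract_quotient hN).elim fun hretract => subsingleton_ext_of_retract hretract h

lemma eq_top_of_smul_top_sup_eq_top (hI : IsNilpotent I) {M : Type*} [AddCommGroup M]
    [Module R M] {N : Submodule R M} (hN : I • ⊤ ⊔ N = ⊤) : N = ⊤ := by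
  have hpow (n : ℕ) : I ^ n • ⊤ ⊔ N = ⊤ := by
    induction n with
    | zero => simp
    | succ n ih =>
      rw [eq_top_iff]
      calc
        ⊤ = I • (I ^ n • ⊤ ⊔ N) ⊔ N := by rw [ih, hN]
        _ = I ^ (n + 1) • ⊤ ⊔ I • N ⊔ N := by
          rw [Submodule.smul_sup, ← Submodule.mul_smul, pow_succ']
        _ ≤ I ^ (n + 1) • ⊤ ⊔ N := by
          rw [sup_assoc, sup_eq_right.2 (Submodule.smul_le_right (N := N))]
  obtain ⟨n, hn⟩ := hI
  simpa [hn] using hpow n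

lemma exists_finsupp_surjective_of_free_quotient (hI : IsNilpotent I) (M : Type v) [AddCommGroup M]
    [Module R M] [Module.Free (R ⧸ I) (M ⧸ (I • ⊤ : Submodule R M))] :
    ∃ (ι : Type v) (f : (ι →₀ R) →ₗ[R] M), Function.Surjective f ∧
      ∀ c ∈ LinearMap.ker f, ∀ j, c j ∈ I := by
  let W : Submodule R M := I • ⊤
  let b := Module.Free.chooseBasis (R ⧸ I) (M ⧸ W)
  let ι := Module.Free.ChooseBasisIndex (R ⧸ I) (M ⧸ W)
  let reduce : (ι →₀ R) →ₗ[R] (ι →₀ R ⧸ I) := Finsupp.mapRange.linearMap I.mkQ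
  have : IsScalarTower R (R ⧸ I) (M ⧸ W) :=
    (Module.isTorsionBySet_quotient_ideal_smul M I).isScalarTower
  let e : (ι →₀ R ⧸ I) ≃ₗ[R] (M ⧸ W) := b.repr.symm.restrictScalars R
  obtain ⟨f, hf⟩ := Module.projective_lifting_property W.mkQ (e.toLinearMap ∘ₗ reduce)
    W.mkQ_surjective
  have hmk (c : ι →₀ R) : W.mkQ (f c) = e (reduce c) := LinearMap.congr_fun hf c
  refine ⟨ι, f, ?_, fun c hc j => ?_⟩
  · have hreduce : Function.Surjective reduce :=
      Finsupp.mapRange_surjective I.mkQ (map_zero _) I.mkQ_surjective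
    have hsup : W ⊔ LinearMap.range f = ⊤ := by
      rw [← Submodule.map_mkQ_eq_top, ← LinearMap.range_comp, hf, LinearMap.range_eq_top]
      exact e.surjective.comp hreduce
    exact LinearMap.range_eq_top.1 (eq_top_of_smul_top_sup_eq_top hI hsup)
  · have hzero : reduce c = 0 := by
      rw [← e.map_eq_zero_iff, ← hmk, LinearMap.mem_ker.1 hc, map_zero]
    exact (Submodule.Quotient.mk_eq_zero I).1 (DFunLike.congr_fun hzero j)

end Ideal

section LocalRing

open IsLocalRing

variable {R : Type u} [CommRing R] [IsLocalRing R]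

lemma not_subsingleton_ext_one_quotient_maximalIdeal (hm : maximalIdeal R ^ 2 = ⊥)
    (hmp : ¬ (maximalIdeal R).IsPrincipal) :
    ¬ Subsingleton (Abelian.Ext.{u} (ModuleCat.of R (R ⧸ maximalIdeal R)) (ModuleCat.of R R)
      1) := by
  intro h
  have hne : maximalIdeal R ≠ ⊥ := fun hbot => hmp (hbot ▸ bot_isPrincipal)
  obtain ⟨x, hxm, hx⟩ := Submodule.exists_mem_ne_zero_of_ne_bot hne
  obtain ⟨y, hym, hy⟩ : ∃ y ∈ maximalIdeal R, y ∉ Ideal.span {x} := by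
    by_contra! hle
    exact hmp ⟨x, le_antisymm hle ((Ideal.span_singleton_le_iff_mem _).2 hxm)⟩
  obtain ⟨g, hgx, hgy⟩ := exists_le_ker_apply_eq_of_notMem (isTorsionBySet_of_sq_eq_bot hm)
    (W := Submodule.comap (maximalIdeal R).subtype (Ideal.span {x})) (y := ⟨y, hym⟩) hy
    (fun a ha => mul_eq_zero_of_sq_eq_bot hm ha hym)
  obtain ⟨r, hr⟩ := exists_eq_smul_of_subsingleton_ext_one h g
  have hxr : x * r = 0 :=
    (hr ⟨x, hxm⟩).symm.trans (hgx (Ideal.mem_span_singleton_self x))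
  have hyr : y = y * r := hgy.symm.trans (hr ⟨y, hym⟩)
  have hrm : r ∈ maximalIdeal R := fun hunit => hx (hunit.mul_left_eq_zero.1 hxr)
  exact hy (by rw [hyr, mul_eq_zero_of_sq_eq_bot hm hym hrm]; exact zero_mem _)

lemma not_subsingleton_ext_succ_quotient_maximalIdeal (hm : maximalIdeal R ^ 2 = ⊥)
    (hmp : ¬ (maximalIdeal R).IsPrincipal) (n : ℕ) :
    ¬ Subsingleton (Abelian.Ext.{u} (ModuleCat.of R (R ⧸ maximalIdeal R)) (ModuleCat.of R R)
      (n + 1)) := by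
  induction n with
  | zero => exact not_subsingleton_ext_one_quotient_maximalIdeal hm hmp
  | succ n ih =>
    intro h
    have : Nontrivial (maximalIdeal R) :=
      Submodule.nontrivial_iff_ne_bot.2 fun hbot => hmp (hbot ▸ bot_isPrincipal)
    exact ih (subsingleton_ext_quotient_of_isTorsionBySet (isTorsionBySet_of_sq_eq_bot hm)
      (subsingleton_ext_X₁_of_projective_X₂ (shortExact_subtype_mkQ (maximalIdeal R)) h))

end LocalRing

theorem stmt5_general (R : Type u) [CommRing R] [IsLocalRing R]
    (hm : IsLocalRing.maximalIdeal R ^ 2 = ⊥)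
    (hmp : ¬ (IsLocalRing.maximalIdeal R).IsPrincipal)
    (M : Type u) [AddCommGroup M] [Module R M]
    (i : ℕ) (hi : 2 ≤ i)
    (hext : Subsingleton (((Ext R (ModuleCat R) i).obj
      (Opposite.op (ModuleCat.of R M))).obj (ModuleCat.of R R))) :
    Module.Free R M := by
  obtain ⟨n, rfl⟩ := Nat.exists_eq_add_of_le' hi
  let : Field (R ⧸ IsLocalRing.maximalIdeal R) := Ideal.Quotient.field _
  obtain ⟨ι, f, hf, hker⟩ := exists_finsupp_surjective_of_free_quotient ⟨2, hm⟩ M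
  have hM := subsingleton_abelianExt_succ_of_subsingleton_ext R _ _ (n + 1) hext
  have hK := subsingleton_ext_X₁_of_projective_X₂ (LinearMap.shortExact_shortComplexKer hf) hM
  have htors : Module.IsTorsionBySet R (LinearMap.ker f) (IsLocalRing.maximalIdeal R) :=
    fun c a => Subtype.ext <| Finsupp.ext fun j =>
      mul_eq_zero_of_sq_eq_bot hm a.2 (hker c c.2 j)
  have hinj : LinearMap.ker f = ⊥ := by
    by_contra hne
    have := Submodule.nontrivial_iff_ne_bot.2 hne
    exact not_subsingleton_ext_succ_quotient_maximalIdeal hm hmp n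
      (subsingleton_ext_quotient_of_isTorsionBySet htors hK)
  exact .of_equiv (.ofBijective f ⟨LinearMap.ker_eq_bot.1 hinj, hf⟩)

/-- Let `(R,𝔪)` be a noetherian local ring with `𝔪² = 0` and `𝔪` not
generated by a single element. If `M` is a finitely generated `R`-module with
`Ext^i_R(M,R) = 0` for some `i ≥ 2`, then `M` is free. -/
theorem stmt5 (R : Type u) [CommRing R] [IsNoetherianRing R] [IsLocalRing R]
    (hm : IsLocalRing.maximalIdeal R ^ 2 = ⊥)
    (hmp : ¬ (IsLocalRing.maximalIdeal R).IsPrincipal)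
    (M : Type u) [AddCommGroup M] [Module R M] [Module.Finite R M]
    (i : ℕ) (hi : 2 ≤ i)
    (hext : Subsingleton (((Ext R (ModuleCat R) i).obj
      (Opposite.op (ModuleCat.of R M))).obj (ModuleCat.of R R))) :
    Module.Free R M :=
  stmt5_general R hm hmp M i hi hext
end

section
/- Let (R,𝔪) be a noetherian local ring with 𝔪² = 0 and 𝔪 not generated by a single element. Then every reflexive R-module is finitely generated and free. -/
/-
Write `k = R/𝔪` and let `M` be a module whose evaluation map is onto. Every nonzero `a ∈ 𝔪` spans
a copy of `k`, so `k`-valued linear maps become `R`-valued ones. If `x ∉ 𝔪 M` but `f x ∈ 𝔪` for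
all `f ∈ M*`, choose `b ≠ 0` and `a ∉ R b` in `𝔪` and a linear map `T : 𝔪 → k` with `T b = 1`;
then `f ↦ T (f x) a` is not the evaluation at any `w ∈ M`, because it takes the value `a` at some
`f` with image in `R b`. Hence `𝔪 M` consists of the `x` with `f x ∈ 𝔪` for all `f`. Given
`l : M* → k`, let `w` represent `f ↦ l f a`; then `w ∈ 𝔪 M`, and dividing its component in `a M`
by `a` gives an `x` whose evaluation reduces to `l`. Applied to `M*`, this says that every map
`M → k` lifts to `R`. Therefore the `k`-vector space `M / 𝔪 M` has a surjective evaluation map, so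
its dimension `n` is finite, and lifting its coordinates gives a map `M → Rⁿ` that is bijective
modulo the nilpotent ideal `𝔪`, hence bijective.
-/

open IsLocalRing TensorProduct

theorem exists_mem_notMem_span_singleton {R M : Type*} [Semiring R] [AddCommMonoid M] [Module R M]
    {P : Submodule R M} (hP : ¬ P.IsPrincipal) {b : M} (hb : b ∈ P) :
    ∃ a ∈ P, a ∉ Submodule.span R {b} := by
  by_contra! h
  exact hP ⟨b, le_antisymm h ((Submodule.span_singleton_le_iff_mem _ _).2 hb)⟩

theorem exists_mem_ne_zero_of_not_isPrincipal {R M : Type*} [Semiring R] [AddCommMonoid M]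
    [Module R M] {P : Submodule R M} (hP : ¬ P.IsPrincipal) : ∃ a ∈ P, a ≠ 0 := by
  simpa using exists_mem_notMem_span_singleton hP P.zero_mem

theorem mul_eq_zero_of_ideal_sq_eq_bot {R : Type*} [CommSemiring R] {I : Ideal R}
    (hI : I ^ 2 = ⊥) {a b : R} (ha : a ∈ I) (hb : b ∈ I) : a * b = 0 := by
  simpa [← sq, hI] using Ideal.mul_mem_mul ha hb

theorem le_of_le_sup_smul_of_isNilpotent {R M : Type*} [CommSemiring R] [AddCommMonoid M]
    [Module R M] {I : Ideal R} (hI : IsNilpotent I) {P Q : Submodule R M} (h : P ≤ Q ⊔ I • P) :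
    P ≤ Q := by
  obtain ⟨n, hn⟩ := hI
  have le_sup_pow : ∀ i : ℕ, P ≤ Q ⊔ I ^ i • P := by
    intro i
    induction i with
    | zero => simp
    | succ i ih =>
      calc P ≤ Q ⊔ I • P := h
        _ ≤ Q ⊔ I • (Q ⊔ I ^ i • P) := by gcongr
        _ = Q ⊔ I • Q ⊔ I ^ (i + 1) • P := by
          rw [Submodule.smul_sup, ← Submodule.mul_smul, ← pow_succ', sup_assoc]
        _ = Q ⊔ I ^ (i + 1) • P := by
          rw [sup_eq_left.2 (Submodule.smul_le_right (I := I) (N := Q))]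
  simpa [hn] using le_sup_pow n

section QuotientTensor

variable {R M N : Type*} [CommRing R] [AddCommGroup M] [Module R M] [AddCommGroup N] [Module R N]
  {I : Ideal R}

theorem one_tmul_eq_zero_iff_mem_smul_top {x : M} :
    (1 : R ⧸ I) ⊗ₜ[R] x = 0 ↔ x ∈ (I • ⊤ : Submodule R M) := by
  rw [← LinearMap.ker_tensorProductMk, LinearMap.mem_ker, TensorProduct.mk_apply]

theorem surjective_of_lTensor_quotient_surjective (hI : IsNilpotent I) {g : M →ₗ[R] N}
    (hg : Function.Surjective (g.lTensor (R ⧸ I))) : Function.Surjective g := by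
  rw [← LinearMap.range_eq_top, ← top_le_iff]
  refine le_of_le_sup_smul_of_isNilpotent hI fun y _ => ?_
  obtain ⟨z, hz⟩ := hg (1 ⊗ₜ y)
  obtain ⟨x, rfl⟩ := TensorProduct.mk_surjective R M (R ⧸ I) Ideal.Quotient.mk_surjective z
  have sub_mem : y - g x ∈ (I • ⊤ : Submodule R N) := by
    rw [← one_tmul_eq_zero_iff_mem_smul_top, TensorProduct.tmul_sub, ← hz,
      TensorProduct.mk_apply, LinearMap.lTensor_tmul, sub_self]
  exact Submodule.mem_sup.2 ⟨g x, ⟨x, rfl⟩, y - g x, sub_mem, add_sub_cancel _ _⟩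

theorem bijective_of_lTensor_quotient_bijective [Module.Projective R N] (hI : IsNilpotent I)
    {g : M →ₗ[R] N} (hg : Function.Bijective (g.lTensor (R ⧸ I))) : Function.Bijective g := by
  have g_surj := surjective_of_lTensor_quotient_surjective hI hg.2
  refine ⟨?_, g_surj⟩
  obtain ⟨s, hs⟩ := Module.projective_lifting_property g LinearMap.id g_surj
  let projKer : M →ₗ[R] M := LinearMap.id - s ∘ₗ g
  have ker_le_smul_top : LinearMap.ker g ≤ I • ⊤ := fun x hx => by
    rw [← one_tmul_eq_zero_iff_mem_smul_top]
    exact hg.1 (by rw [LinearMap.lTensor_tmul, hx, TensorProduct.tmul_zero, map_zero])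
  have ker_le_map_projKer : LinearMap.ker g ≤ (LinearMap.ker g).map projKer := fun x hx =>
    ⟨x, hx, by simp [projKer, LinearMap.mem_ker.1 hx]⟩
  have map_projKer_top_le : (⊤ : Submodule R M).map projKer ≤ LinearMap.ker g := by
    rintro _ ⟨x, -, rfl⟩
    simpa [projKer, sub_eq_zero] using (LinearMap.congr_fun hs (g x)).symm
  have ker_le_smul_ker : LinearMap.ker g ≤ ⊥ ⊔ I • LinearMap.ker g :=
    calc LinearMap.ker g ≤ (LinearMap.ker g).map projKer := ker_le_map_projKer
      _ ≤ (I • ⊤ : Submodule R M).map projKer := Submodule.map_mono ker_le_smul_top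
      _ = I • (⊤ : Submodule R M).map projKer := Submodule.map_smul'' _ _ _
      _ ≤ ⊥ ⊔ I • LinearMap.ker g := by rw [bot_sup_eq]; gcongr
  exact LinearMap.ker_eq_bot.1 (le_bot_iff.1 (le_of_le_sup_smul_of_isNilpotent hI ker_le_smul_ker))

end QuotientTensor

theorem dual_eval_dual_surjective {R M : Type*} [CommSemiring R] [AddCommMonoid M] [Module R M]
    (hM : Function.Surjective (Module.Dual.eval R M)) :
    Function.Surjective (Module.Dual.eval R (Module.Dual R M)) := fun F =>
  ⟨F ∘ₗ Module.Dual.eval R M, LinearMap.ext fun φ => by obtain ⟨x, rfl⟩ := hM φ; rfl⟩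

theorem exists_comp_eq_of_surjective_of_ker_le {R M N P : Type*} [Ring R] [AddCommGroup M]
    [Module R M] [AddCommGroup N] [Module R N] [AddCommGroup P] [Module R P] {f : M →ₗ[R] N}
    (hf : Function.Surjective f) {g : M →ₗ[R] P} (h : LinearMap.ker f ≤ LinearMap.ker g) :
    ∃ l : N →ₗ[R] P, l ∘ₗ f = g := by
  refine ⟨(LinearMap.ker f).liftQ g h ∘ₗ (f.quotKerEquivOfSurjective hf).symm, ?_⟩
  ext x
  simp

section LocalRing

variable {R M : Type*} [CommRing R] [IsLocalRing R] [AddCommGroup M] [Module R M]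

theorem exists_linearMap_residueField_eq_one {x : M}
    (hx : x ∉ (maximalIdeal R • ⊤ : Submodule R M)) : ∃ μ : M →ₗ[R] ResidueField R, μ x = 1 := by
  have tmul_ne_zero : (1 : ResidueField R) ⊗ₜ[R] x ≠ 0 :=
    one_tmul_eq_zero_iff_mem_smul_top.not.2 hx
  obtain ⟨φ, hφ⟩ := Module.Projective.exists_dual_eq_one (ResidueField R) tmul_ne_zero
  exact ⟨φ.restrictScalars R ∘ₗ TensorProduct.mk R (ResidueField R) M 1, hφ⟩

theorem linearMap_residueField_eq_zero (μ : M →ₗ[R] ResidueField R) {x : M}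
    (hx : x ∈ (maximalIdeal R • ⊤ : Submodule R M)) : μ x = 0 := by
  have tmul_eq_zero : (1 : ResidueField R) ⊗ₜ[R] x = 0 := one_tmul_eq_zero_iff_mem_smul_top.2 hx
  rw [← LinearMap.liftBaseChange_one_tmul (ResidueField R) μ, tmul_eq_zero, map_zero]

theorem exists_residueField_linearMap_apply_residue {x : M}
    (hx : ∀ r ∈ maximalIdeal R, r • x = 0) :
    ∃ ι : ResidueField R →ₗ[R] M, ∀ r, ι (residue R r) = r • x :=
  ⟨(maximalIdeal R).liftQ (LinearMap.toSpanSingleton R M x) hx, fun _ => rfl⟩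

theorem exists_maximalIdeal_linearMap_eq_one (hm : maximalIdeal R ^ 2 = ⊥)
    {a : maximalIdeal R} (ha : a ≠ 0) : ∃ T : maximalIdeal R →ₗ[R] ResidueField R, T a = 1 := by
  have smul_top_eq_bot : (maximalIdeal R • ⊤ : Submodule R (maximalIdeal R)) = ⊥ := by
    refine le_bot_iff.1 (Submodule.smul_le.2 fun r hr n _ => Subtype.ext ?_)
    exact mul_eq_zero_of_ideal_sq_eq_bot hm hr n.2
  exact exists_linearMap_residueField_eq_one (by simpa [smul_top_eq_bot] using ha)

theorem exists_maximalIdeal_le_span_singleton_sup_disjoint (hm : maximalIdeal R ^ 2 = ⊥) {a : R}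
    (ha : a ∈ maximalIdeal R) (ha0 : a ≠ 0) :
    ∃ J : Ideal R, maximalIdeal R ≤ Ideal.span {a} ⊔ J ∧ Disjoint (Ideal.span {a}) J := by
  obtain ⟨T, hT⟩ := exists_maximalIdeal_linearMap_eq_one hm (a := ⟨a, ha⟩) (by simpa using ha0)
  have T_smul (r : R) : T (r • ⟨a, ha⟩) = residue R r := by
    rw [map_smul, hT, Algebra.smul_def, mul_one, ResidueField.algebraMap_eq]
  refine ⟨(LinearMap.ker T).map (maximalIdeal R).subtype, fun r hr => ?_, ?_⟩
  · obtain ⟨t, ht⟩ := residue_surjective (T ⟨r, hr⟩)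
    refine Submodule.mem_sup.2 ⟨t * a, Ideal.mul_mem_left _ t (Ideal.mem_span_singleton_self a),
      r - t * a, ⟨⟨r, hr⟩ - t • ⟨a, ha⟩, ?_, rfl⟩, add_sub_cancel _ _⟩
    exact LinearMap.mem_ker.2 (by rw [map_sub, T_smul, ht, sub_self])
  · rw [Submodule.disjoint_def]
    rintro _ h ⟨y, hy, rfl⟩
    obtain ⟨s, hs⟩ := Ideal.mem_span_singleton'.1 h
    obtain rfl : s • ⟨a, ha⟩ = y := Subtype.ext hs
    have s_mem : s ∈ maximalIdeal R := by
      rwa [← residue_eq_zero_iff, ← T_smul]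
    exact mul_eq_zero_of_ideal_sq_eq_bot hm s_mem ha

theorem exists_forall_dual_apply_eq_mul (hm : maximalIdeal R ^ 2 = ⊥) {a : R}
    (ha : a ∈ maximalIdeal R) (ha0 : a ≠ 0) {w : M} (hw : w ∈ (maximalIdeal R • ⊤ : Submodule R M))
    (hfw : ∀ f : Module.Dual R M, f w ∈ Ideal.span {a}) :
    ∃ x : M, ∀ f : Module.Dual R M, f w = a * f x := by
  obtain ⟨J, hJ, disj⟩ := exists_maximalIdeal_le_span_singleton_sup_disjoint hm ha ha0
  have w_mem_sup := Submodule.smul_mono_left hJ hw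
  rw [Submodule.sup_smul, Submodule.ideal_span_singleton_smul] at w_mem_sup
  obtain ⟨_, ⟨x, -, rfl⟩, z, hz, rfl⟩ := Submodule.mem_sup.1 w_mem_sup
  have apply_add (f : Module.Dual R M) : f (a • x + z) = a * f x + f z := by simp
  refine ⟨x, fun f => ?_⟩
  have apply_z_mem : f z ∈ J := by
    simpa using Submodule.smul_top_le_comap_smul_top J f hz
  have apply_z_mem_span : f z ∈ Ideal.span {a} := by
    rw [← Ideal.add_mem_iff_right _ (Ideal.mul_mem_right _ _ (Ideal.mem_span_singleton_self a)),
      ← apply_add]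
    exact hfw f
  have apply_z_eq_zero : f z = 0 := Submodule.disjoint_def.1 disj _ apply_z_mem_span apply_z_mem
  exact (apply_add f).trans (by rw [apply_z_eq_zero, add_zero])

theorem mem_smul_top_of_forall_dual_apply_mem (hm : maximalIdeal R ^ 2 = ⊥)
    (hmp : ¬ (maximalIdeal R).IsPrincipal) (hM : Function.Surjective (Module.Dual.eval R M)) {x : M}
    (hx : ∀ f : Module.Dual R M, f x ∈ maximalIdeal R) :
    x ∈ (maximalIdeal R • ⊤ : Submodule R M) := by
  by_contra hxm
  obtain ⟨b, hb, hb0⟩ := exists_mem_ne_zero_of_not_isPrincipal hmp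
  obtain ⟨a, ha, hab⟩ := exists_mem_notMem_span_singleton hmp hb
  obtain ⟨μ, hμ⟩ := exists_linearMap_residueField_eq_one hxm
  obtain ⟨T, hT⟩ := exists_maximalIdeal_linearMap_eq_one hm (a := ⟨b, hb⟩) (by simpa using hb0)
  obtain ⟨ιa, hιa⟩ := exists_residueField_linearMap_apply_residue
    fun r hr => mul_eq_zero_of_ideal_sq_eq_bot hm hr ha
  obtain ⟨ιb, hιb⟩ := exists_residueField_linearMap_apply_residue
    fun r hr => mul_eq_zero_of_ideal_sq_eq_bot hm hr hb
  obtain ⟨w, hw⟩ := hM (ιa ∘ₗ T ∘ₗ (Module.Dual.eval R M x).codRestrict (maximalIdeal R) hx)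
  have apply_w : ιb (μ w) = a := by
    have apply_x : ιb (μ x) = b := by rw [hμ, ← map_one (residue R), hιb, one_smul]
    calc ιb (μ w) = ιa (T ⟨ιb (μ x), hx (ιb ∘ₗ μ)⟩) := LinearMap.congr_fun hw (ιb ∘ₗ μ)
      _ = ιa (residue R 1) := by simp only [apply_x, hT, map_one]
      _ = a := by rw [hιa, one_smul]
  obtain ⟨r, hr⟩ := residue_surjective (μ w)
  rw [← hr, hιb] at apply_w
  exact hab (Ideal.mem_span_singleton'.2 ⟨r, apply_w⟩)

theorem exists_forall_residue_apply_eq (hm : maximalIdeal R ^ 2 = ⊥)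
    (hmp : ¬ (maximalIdeal R).IsPrincipal) (hM : Function.Surjective (Module.Dual.eval R M))
    (l : Module.Dual R M →ₗ[R] ResidueField R) :
    ∃ x : M, ∀ f : Module.Dual R M, residue R (f x) = l f := by
  obtain ⟨a, ha, ha0⟩ := exists_mem_ne_zero_of_not_isPrincipal hmp
  obtain ⟨ι, hι⟩ := exists_residueField_linearMap_apply_residue
    fun r hr => mul_eq_zero_of_ideal_sq_eq_bot hm hr ha
  obtain ⟨w, hw⟩ := hM (ι ∘ₗ l)
  have apply_w (f : Module.Dual R M) : ∃ r, residue R r = l f ∧ f w = r * a := by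
    obtain ⟨r, hr⟩ := residue_surjective (l f)
    exact ⟨r, hr, (LinearMap.congr_fun hw f).trans (by rw [LinearMap.comp_apply, ← hr, hι]; rfl)⟩
  have apply_w_mem (f : Module.Dual R M) : f w ∈ Ideal.span {a} :=
    let ⟨r, _, hr⟩ := apply_w f
    Ideal.mem_span_singleton'.2 ⟨r, hr.symm⟩
  have w_mem : w ∈ (maximalIdeal R • ⊤ : Submodule R M) :=
    mem_smul_top_of_forall_dual_apply_mem hm hmp hM fun f =>
      (Ideal.span_singleton_le_iff_mem _).2 ha (apply_w_mem f)
  obtain ⟨x, hx⟩ := exists_forall_dual_apply_eq_mul hm ha ha0 w_mem apply_w_mem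
  refine ⟨x, fun f => ?_⟩
  obtain ⟨r, hr, hfw⟩ := apply_w f
  have sub_mul : (f x - r) * a = 0 := by linear_combination hfw - hx f
  rw [← hr, ← sub_eq_zero, ← map_sub, residue_eq_zero_iff]
  by_contra sub_notMem
  exact ha0 ((notMem_maximalIdeal.1 sub_notMem).mul_right_eq_zero.1 sub_mul)

theorem exists_dual_forall_residue_apply_eq (hm : maximalIdeal R ^ 2 = ⊥)
    (hmp : ¬ (maximalIdeal R).IsPrincipal) (hM : Function.Surjective (Module.Dual.eval R M))
    (μ : M →ₗ[R] ResidueField R) : ∃ f : Module.Dual R M, ∀ x, residue R (f x) = μ x := by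
  have ker_le : LinearMap.ker (Module.Dual.eval R M) ≤ LinearMap.ker μ := fun x hx => by
    refine linearMap_residueField_eq_zero μ
      (mem_smul_top_of_forall_dual_apply_mem hm hmp hM fun f => ?_)
    rw [← Module.Dual.eval_apply, LinearMap.mem_ker.1 hx]
    exact zero_mem _
  obtain ⟨l, rfl⟩ := exists_comp_eq_of_surjective_of_ker_le hM ker_le
  obtain ⟨f, hf⟩ := exists_forall_residue_apply_eq hm hmp (dual_eval_dual_surjective hM) l
  exact ⟨f, fun x => hf (Module.Dual.eval R M x)⟩

theorem finite_residueField_tensorProduct (hm : maximalIdeal R ^ 2 = ⊥)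
    (hmp : ¬ (maximalIdeal R).IsPrincipal) (hM : Function.Surjective (Module.Dual.eval R M)) :
    Module.Finite (ResidueField R) (ResidueField R ⊗[R] M) := by
  let red : Module.Dual R M →ₗ[R] Module.Dual (ResidueField R) (ResidueField R ⊗[R] M) :=
    ((LinearMap.liftBaseChangeEquiv (R := R) (M := M) (N := ResidueField R)
      (ResidueField R)).restrictScalars R).toLinearMap ∘ₗ
        LinearMap.compRight R (Algebra.linearMap R (ResidueField R))
  have red_one_tmul (f : Module.Dual R M) (x : M) : red f (1 ⊗ₜ x) = residue R (f x) :=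
    LinearMap.liftBaseChange_one_tmul _ _ _
  have red_surjective : Function.Surjective red := fun φ => by
    obtain ⟨f, hf⟩ := exists_dual_forall_residue_apply_eq hm hmp hM
      (φ.restrictScalars R ∘ₗ TensorProduct.mk R (ResidueField R) M 1)
    refine ⟨f, TensorProduct.AlgebraTensorModule.curry_injective ?_⟩
    ext x
    exact (red_one_tmul f x).trans (hf x)
  have : Module.IsReflexive (ResidueField R) (ResidueField R ⊗[R] M) := by
    refine ⟨Module.eval_apply_injective _, fun L => ?_⟩
    obtain ⟨x, hx⟩ := exists_forall_residue_apply_eq hm hmp hM (L.restrictScalars R ∘ₗ red)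
    refine ⟨1 ⊗ₜ x, LinearMap.ext fun φ => ?_⟩
    obtain ⟨f, rfl⟩ := red_surjective φ
    exact (red_one_tmul f x).trans (hx f)
  infer_instance

theorem exists_linearEquiv_pi_fin (hm : maximalIdeal R ^ 2 = ⊥)
    (hmp : ¬ (maximalIdeal R).IsPrincipal) (hM : Function.Surjective (Module.Dual.eval R M)) :
    ∃ n : ℕ, Nonempty (M ≃ₗ[R] (Fin n → R)) := by
  have := finite_residueField_tensorProduct hm hmp hM
  let b := Module.finBasis (ResidueField R) (ResidueField R ⊗[R] M)
  choose f hf using fun i => exists_dual_forall_residue_apply_eq hm hmp hM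
    ((b.coord i).restrictScalars R ∘ₗ TensorProduct.mk R (ResidueField R) M 1)
  let g := LinearMap.pi f
  let e := TensorProduct.piScalarRight R (ResidueField R) (ResidueField R)
    (Fin (Module.finrank (ResidueField R) (ResidueField R ⊗[R] M)))
  have e_comp_baseChange :
      e.toLinearMap ∘ₗ g.baseChange (ResidueField R) = b.equivFun.toLinearMap := by
    refine TensorProduct.AlgebraTensorModule.curry_injective ?_
    ext x i
    simpa [e, g, Algebra.smul_def] using hf i x
  have baseChange_bijective : Function.Bijective (g.baseChange (ResidueField R)) := by
    rw [← e.bijective.of_comp_iff', ← LinearEquiv.coe_coe, ← LinearMap.coe_comp, e_comp_baseChange]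
    exact b.equivFun.bijective
  exact ⟨_, ⟨LinearEquiv.ofBijective g
    (bijective_of_lTensor_quotient_bijective ⟨2, hm⟩ baseChange_bijective)⟩⟩

theorem stmt6_general (hm : maximalIdeal R ^ 2 = ⊥) (hmp : ¬ (maximalIdeal R).IsPrincipal)
    (hM : Function.Surjective (Module.Dual.eval R M)) : Module.Finite R M ∧ Module.Free R M := by
  obtain ⟨n, ⟨e⟩⟩ := exists_linearEquiv_pi_fin hm hmp hM
  exact ⟨Module.Finite.equiv e.symm, Module.Free.of_equiv e.symm⟩

end LocalRing

/-- Let `(R,𝔪)` be a noetherian local ring with `𝔪² = 0` and `𝔪` not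
generated by a single element. Then every reflexive `R`-module is finitely generated
and free. -/
theorem stmt6 (R : Type u) [CommRing R] [IsNoetherianRing R] [IsLocalRing R]
    (hm : IsLocalRing.maximalIdeal R ^ 2 = ⊥)
    (hmp : ¬ (IsLocalRing.maximalIdeal R).IsPrincipal)
    (M : Type u) [AddCommGroup M] [Module R M]
    (h : Module.IsReflexive R M) :
    Module.Finite R M ∧ Module.Free R M :=
  stmt6_general hm hmp h.bijective_dual_eval'.2
end

section
/- Let (R,𝔪) be a noetherian local ring with 𝔪³ = 0, with 𝔪 not generated by a single element, and with 𝔪² ≠ (0 :_R 𝔪), where (0 :_R 𝔪) = {x ∈ R : 𝔪x = 0} is the socle of R. Then for a finitely generated R-module M the following are equivalent: (1) M is free; (2) M is reflexive; (3) the evaluation map M → M** is surjective; (4) Ext^i_R(M,R) = 0 for all i > 0; (5) Ext^i_R(M*,R) = 0 for all i > 0. -/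
open CategoryTheory

/-!
Write `k = R ⧸ 𝔪`. Choose `x` in the socle but not in `𝔪²`, and `y` in the socle but not in `xR`.
As `x ∉ 𝔪²`, some functional `𝔪 → k` is nonzero at `x`; composed with `k ≅ yR ⊆ R` it becomes
`θ : 𝔪 → R` with `θ x ∉ xR`. All the obstructions come from `θ`.

* If `π : P → K` is a map from a projective module and `n ∉ 𝔪K` is a value of `π` killed by `x`,
  then some map `ker π → R` does not extend to `P`: lift a map `P → K → k` that is nonzero over `n`
  to `L : P → R`, which sends `ker π` to `𝔪`, and take `θ ∘ L`.
* If `M` is not free and `0 → K → P → M → 0` is exact with `P` projective, then some `n ∈ K ∩ 𝔪P`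
  lies outside `𝔪K`. It is killed by `x`, so a surjection from a projective module onto `K` shows
  `Ext²(M, R) = Ext¹(K, R) ≠ 0`.
* If `M` is not free, then some `n ∈ M` lies outside `𝔪M` although every functional maps it into
  `𝔪`. The functional `θ ∘ ev_n` on `M*` is not an evaluation. Moreover a functional `M → k ≅ xR`
  sending `n` to `x` is killed by `x` and lies outside `𝔪M*`, so `Ext¹(M*, R) ≠ 0`.
-/

open IsLocalRing

section Socle

/-- The socle `(0 :_R 𝔪)` of a local ring, written with `Submodule.colon` so that it unfolds to the
expression in the hypotheses of the theorem. -/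
abbrev localSocle (R : Type*) [CommRing R] [IsLocalRing R] : Ideal R :=
  Submodule.colon (⊥ : Ideal R) (maximalIdeal R)

variable {R : Type*} [CommRing R] [IsLocalRing R]

lemma mem_localSocle {x : R} : x ∈ localSocle R ↔ ∀ a ∈ maximalIdeal R, x * a = 0 := by
  simp only [Submodule.mem_colon, SetLike.mem_coe, smul_eq_mul, Submodule.mem_bot]

lemma localSocle_le_maximalIdeal (hs : ¬ (localSocle R).IsPrincipal) :
    localSocle R ≤ maximalIdeal R :=
  le_maximalIdeal fun h ↦ hs (h ▸ inferInstance)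

lemma sq_maximalIdeal_le_localSocle (hm3 : maximalIdeal R ^ 3 = ⊥) :
    maximalIdeal R ^ 2 ≤ localSocle R := fun z hz ↦ mem_localSocle.2 fun a ha ↦ by
  rw [← Ideal.mem_bot, ← hm3, pow_succ]
  exact Ideal.mul_mem_mul hz ha

lemma eq_bot_of_lt_localSocle [hs : (localSocle R).IsPrincipal] {I : Ideal R}
    (hI : I < localSocle R) : I = ⊥ := by
  obtain ⟨s, hs : localSocle R = Ideal.span {s}⟩ := hs
  refine (Submodule.eq_bot_iff I).2 fun a ha ↦ ?_
  obtain ⟨r, rfl⟩ := Ideal.mem_span_singleton'.1 (hs ▸ hI.le ha)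
  have hsI : s ∉ I := fun h ↦ hI.not_ge (hs ▸ (Ideal.span_singleton_le_iff_mem I).2 h)
  have hr : r ∈ maximalIdeal R := fun hu ↦ hsI ((Ideal.unit_mul_mem_iff_mem I hu).1 ha)
  rw [mul_comm]
  exact mem_localSocle.1 (hs ▸ Ideal.mem_span_singleton_self s) r hr

lemma not_isPrincipal_localSocle (hm3 : maximalIdeal R ^ 3 = ⊥)
    (hmp : ¬ (maximalIdeal R).IsPrincipal) (hsoc : maximalIdeal R ^ 2 ≠ localSocle R) :
    ¬ (localSocle R).IsPrincipal := fun hs ↦ by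
  have hm2 : maximalIdeal R ^ 2 = ⊥ :=
    eq_bot_of_lt_localSocle ((sq_maximalIdeal_le_localSocle hm3).lt_of_ne hsoc)
  have hle : maximalIdeal R ≤ localSocle R := fun z hz ↦ mem_localSocle.2 fun a ha ↦ by
    rw [← Ideal.mem_bot, ← hm2, sq]
    exact Ideal.mul_mem_mul hz ha
  have hne : maximalIdeal R ≠ localSocle R := fun h ↦ hmp (h ▸ hs)
  exact hmp (eq_bot_of_lt_localSocle (hle.lt_of_ne hne) ▸ inferInstance)

end Socle

section LinearForms

open TensorProduct

variable {R : Type*} [CommRing R] [IsLocalRing R]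
  {M : Type*} [AddCommGroup M] [Module R M]

lemma residueField_one_tmul_eq_zero_iff {n : M} :
    (1 : ResidueField R) ⊗ₜ[R] n = 0 ↔ n ∈ maximalIdeal R • (⊤ : Submodule R M) := by
  rw [← LinearMap.ker_tensorProductMk]; rfl

lemma exists_residueField_hom_apply_eq_one {n : M} (hn : n ∉ maximalIdeal R • (⊤ : Submodule R M)) :
    ∃ l : M →ₗ[R] ResidueField R, l n = 1 := by
  have hne : (1 : ResidueField R) ⊗ₜ[R] n ≠ 0 := mt residueField_one_tmul_eq_zero_iff.1 hn
  obtain ⟨φ, hφ⟩ := Module.Projective.exists_dual_eq_one (ResidueField R) hne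
  exact ⟨φ.restrictScalars R ∘ₗ TensorProduct.mk R (ResidueField R) M 1, hφ⟩

lemma exists_residueField_hom_apply_one_eq {y : R} (hy : y ∈ localSocle R) :
    ∃ ψ : ResidueField R →ₗ[R] R, ψ 1 = y :=
  ⟨(maximalIdeal R).liftQ (LinearMap.toSpanSingleton R R y) fun a ha ↦ by
    simpa [mul_comm] using mem_localSocle.1 hy a ha,
    (Submodule.liftQ_apply _ _ _).trans (one_smul R y)⟩

lemma residueField_hom_apply_mem_span (ψ : ResidueField R →ₗ[R] R) (t : ResidueField R) :
    ψ t ∈ Ideal.span {ψ 1} := by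
  obtain ⟨r, rfl⟩ := residue_surjective t
  have hr : residue R r = r • (1 : ResidueField R) := Algebra.algebraMap_eq_smul_one r
  rw [hr, map_smul]
  exact Ideal.mul_mem_left _ r (Ideal.mem_span_singleton_self _)

lemma exists_dual_apply_eq_of_mem_localSocle {n : M}
    (hn : n ∉ maximalIdeal R • (⊤ : Submodule R M)) {y : R} (hy : y ∈ localSocle R) :
    ∃ h : Module.Dual R M, h n = y ∧ ∀ z, h z ∈ Ideal.span {y} := by
  obtain ⟨l, hl⟩ := exists_residueField_hom_apply_eq_one hn
  obtain ⟨ψ, rfl⟩ := exists_residueField_hom_apply_one_eq hy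
  exact ⟨ψ ∘ₗ l, congrArg ψ hl, fun z ↦ residueField_hom_apply_mem_span ψ (l z)⟩

lemma smul_eq_zero_of_mem_localSocle {x : R} (hx : x ∈ localSocle R) {n : M}
    (hn : n ∈ maximalIdeal R • (⊤ : Submodule R M)) : x • n = 0 := by
  refine Submodule.smul_induction_on hn (fun a ha m _ ↦ ?_) fun m₁ m₂ h₁ h₂ ↦ ?_
  · rw [smul_smul, mem_localSocle.1 hx a ha, zero_smul]
  · rw [smul_add, h₁, h₂, add_zero]

lemma mem_sq_maximalIdeal_of_mem_smul_top {x : maximalIdeal R}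
    (hx : x ∈ maximalIdeal R • (⊤ : Submodule R (maximalIdeal R))) :
    (x : R) ∈ maximalIdeal R ^ 2 := by
  have := Submodule.mem_map_of_mem (f := (maximalIdeal R).subtype) hx
  rwa [Submodule.map_smul'', Submodule.map_top, Submodule.range_subtype, smul_eq_mul, ← sq] at this

lemma mem_sq_maximalIdeal_of_mem_smul_top_dual {n : M}
    (hn : ∀ f : Module.Dual R M, f n ∈ maximalIdeal R) {h : Module.Dual R M}
    (hh : h ∈ maximalIdeal R • (⊤ : Submodule R (Module.Dual R M))) :
    h n ∈ maximalIdeal R ^ 2 := by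
  have hmap := Submodule.mem_map_of_mem (f := Module.Dual.eval R M n) hh
  rw [Submodule.map_smul'', Submodule.map_top] at hmap
  rw [sq]
  exact Submodule.smul_mono le_rfl (by rintro _ ⟨f, rfl⟩; exact hn f) hmap

end LinearForms

section Freeness

open TensorProduct

variable {R : Type*} [CommRing R] [IsLocalRing R]
  {M : Type*} [AddCommGroup M] [Module R M]

lemma exists_one_tmul_eq (z : ResidueField R ⊗[R] M) : ∃ n : M, 1 ⊗ₜ n = z :=
  TensorProduct.mk_surjective R M (ResidueField R) Ideal.Quotient.mk_surjective z

lemma exists_notMem_smul_top_of_not_free [Module.Finite R M] (hM : ¬ Module.Free R M) :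
    ∃ n : M, n ∉ maximalIdeal R • (⊤ : Submodule R M) ∧
      ∀ f : Module.Dual R M, f n ∈ maximalIdeal R := by
  contrapose! hM with hsep
  let κ (f : Module.Dual R M) := LinearMap.ker (LinearMap.baseChange (ResidueField R) f)
  obtain ⟨s, hs⟩ := Finset.exists_inf_le κ
  let l : M →ₗ[R] (s → R) := LinearMap.pi fun f ↦ f.1
  have hl : Function.Injective (l.lTensor (ResidueField R)) := by
    rw [injective_iff_map_eq_zero]
    intro z hz
    have hzs : z ∈ s.inf κ := Submodule.mem_finsetInf.2 fun f hf ↦ by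
      have hproj : f = LinearMap.proj (⟨f, hf⟩ : s) ∘ₗ l := rfl
      rw [LinearMap.mem_ker, LinearMap.baseChange_eq_ltensor, hproj,
        LinearMap.lTensor_comp_apply, hz, map_zero]
    obtain ⟨n, rfl⟩ := exists_one_tmul_eq z
    by_contra hn
    obtain ⟨f, hf⟩ := hsep n (mt residueField_one_tmul_eq_zero_iff.2 hn)
    have hfn : (1 : ResidueField R) ⊗ₜ[R] f n = 0 := LinearMap.mem_ker.1 (hs f hzs)
    exact hf (by simpa using residueField_one_tmul_eq_zero_iff.1 hfn)
  obtain ⟨r, hr⟩ := (split_injective_iff_lTensor_residueField_injective l).2 hl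
  have : Module.Projective R M := .of_split l r hr
  exact Module.free_of_flat_of_isLocalRing

lemma exists_mem_ker_inf_smul_top_of_not_free [Module.FinitePresentation R M]
    (hM : ¬ Module.Free R M) {P : Type*} [AddCommGroup P] [Module R P] [Module.Flat R P]
    (p : P →ₗ[R] M) (hp : Function.Surjective p) :
    ∃ n : LinearMap.ker p, (n : P) ∈ maximalIdeal R • (⊤ : Submodule R P) ∧
      n ∉ maximalIdeal R • (⊤ : Submodule R (LinearMap.ker p)) := by
  contrapose! hM with hker
  have hinj : Function.Injective ((LinearMap.ker p).subtype.lTensor (ResidueField R)) := by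
    rw [injective_iff_map_eq_zero]
    intro z hz
    obtain ⟨n, rfl⟩ := exists_one_tmul_eq z
    exact residueField_one_tmul_eq_zero_iff.2 (hker n (residueField_one_tmul_eq_zero_iff.1 hz))
  apply Module.free_of_maximalIdeal_rTensor_injective
  rw [← LinearMap.lTensor_inj_iff_rTensor_inj]
  exact lTensor_injective_of_exact_of_exact_of_rTensor_injective
    p.exact_subtype_ker_map hp (LinearMap.exact_subtype_mkQ (maximalIdeal R))
    (Submodule.mkQ_surjective _) ((LinearMap.lTensor_inj_iff_rTensor_inj _ _).1 hinj)
    (Module.Flat.lTensor_preserves_injective_linearMap _ Subtype.val_injective)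

end Freeness

section Obstruction

variable {R : Type*} [CommRing R] [IsLocalRing R] {x : maximalIdeal R}
  {θ : maximalIdeal R →ₗ[R] R}

lemma exists_maximalIdeal_hom_apply_notMem_span (hs : ¬ (localSocle R).IsPrincipal)
    (hx : (x : R) ∈ localSocle R) (hx2 : (x : R) ∉ maximalIdeal R ^ 2) :
    ∃ θ : maximalIdeal R →ₗ[R] R, θ x ∉ Ideal.span {(x : R)} := by
  obtain ⟨y, hy, hyx⟩ : ∃ y ∈ localSocle R, y ∉ Ideal.span {(x : R)} := by
    by_contra! hle
    exact hs ⟨x, le_antisymm hle ((Ideal.span_singleton_le_iff_mem _).2 hx)⟩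
  have hxn := mt mem_sq_maximalIdeal_of_mem_smul_top hx2
  obtain ⟨θ, hθ, -⟩ := exists_dual_apply_eq_of_mem_localSocle hxn hy
  exact ⟨θ, hθ ▸ hyx⟩

lemma exists_ker_hom_forall_comp_subtype_ne (hθ : θ x ∉ Ideal.span {(x : R)})
    {P K : Type*} [AddCommGroup P] [Module R P] [Module.Projective R P]
    [AddCommGroup K] [Module R K] (π : P →ₗ[R] K) {e : P} (hxe : (x : R) • π e = 0)
    (he : π e ∉ maximalIdeal R • (⊤ : Submodule R K)) :
    ∃ f : LinearMap.ker π →ₗ[R] R, ∀ g : P →ₗ[R] R, g ∘ₗ (LinearMap.ker π).subtype ≠ f := by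
  obtain ⟨l, hl⟩ := exists_residueField_hom_apply_eq_one he
  obtain ⟨L, hL⟩ := Module.projective_lifting_property
    (Algebra.linearMap R (ResidueField R)) (l ∘ₗ π) residue_surjective
  have hL (z : P) : residue R (L z) = l (π z) := LinearMap.congr_fun hL z
  have hLe : IsUnit (L e) := (residue_ne_zero_iff_isUnit _).1 (by simp [hL, hl])
  have hLker (z : LinearMap.ker π) : L z ∈ maximalIdeal R := by
    rw [← residue_eq_zero_iff, hL, z.2, map_zero]
  let L' : LinearMap.ker π →ₗ[R] maximalIdeal R :=
    (L ∘ₗ (LinearMap.ker π).subtype).codRestrict (maximalIdeal R) hLker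
  refine ⟨θ ∘ₗ L', fun g hg ↦ hθ ?_⟩
  let xe : LinearMap.ker π := ⟨(x : R) • e, by rw [LinearMap.mem_ker, map_smul, hxe]⟩
  have hL'xe : L' xe = L e • x := by
    apply Subtype.ext
    change L ((x : R) • e) = L e * x
    rw [map_smul, smul_eq_mul, mul_comm]
  have hmul : L e * θ x = g e * x := calc
    L e * θ x = θ (L' xe) := by rw [hL'xe, map_smul, smul_eq_mul]
    _ = g xe := (LinearMap.congr_fun hg xe).symm
    _ = g e * x := by simp [xe, mul_comm]
  rw [← Ideal.unit_mul_mem_iff_mem _ hLe, hmul]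
  exact Ideal.mul_mem_left _ _ (Ideal.mem_span_singleton_self _)

end Obstruction

section Reflexivity

variable {R : Type*} [CommRing R] [IsLocalRing R] {x : maximalIdeal R}
  {θ : maximalIdeal R →ₗ[R] R} {M : Type*} [AddCommGroup M] [Module R M] [Module.Finite R M]

lemma free_of_surjective_dual_eval (hx : (x : R) ∈ localSocle R)
    (hθ : θ x ∉ Ideal.span {(x : R)}) (hM : Function.Surjective (Module.Dual.eval R M)) :
    Module.Free R M := by
  by_contra hfree
  obtain ⟨n, hn, hnm⟩ := exists_notMem_smul_top_of_not_free hfree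
  obtain ⟨h, hhn, hspan⟩ := exists_dual_apply_eq_of_mem_localSocle hn hx
  let ev : Module.Dual R M →ₗ[R] maximalIdeal R :=
    (Module.Dual.eval R M n).codRestrict (maximalIdeal R) hnm
  obtain ⟨m, hm⟩ := hM (θ ∘ₗ ev)
  have hev : ev h = x := Subtype.ext hhn
  have hθm : θ x = h m := hev ▸ (LinearMap.congr_fun hm h).symm
  exact hθ (hθm ▸ hspan m)

lemma exists_dual_notMem_smul_top_of_not_free (hx : (x : R) ∈ localSocle R)
    (hx2 : (x : R) ∉ maximalIdeal R ^ 2) (hM : ¬ Module.Free R M) :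
    ∃ h : Module.Dual R M, h ∉ maximalIdeal R • (⊤ : Submodule R (Module.Dual R M)) ∧
      (x : R) • h = 0 := by
  obtain ⟨n, hn, hnm⟩ := exists_notMem_smul_top_of_not_free hM
  obtain ⟨h, hhn, hspan⟩ := exists_dual_apply_eq_of_mem_localSocle hn hx
  refine ⟨h, fun hh ↦ hx2 (hhn ▸ mem_sq_maximalIdeal_of_mem_smul_top_dual hnm hh), ?_⟩
  ext z
  exact mem_localSocle.1 hx _ ((Ideal.span_singleton_le_iff_mem _).2 x.2 (hspan z))

end Reflexivity

section Ext

lemma subsingleton_ext_of_free {R : Type u} [CommRing R] {M : Type u} [AddCommGroup M]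
    [Module R M] [Module.Free R M] (N : ModuleCat.{u} R) {i : ℕ} (hi : 0 < i) :
    Subsingleton (((Ext R (ModuleCat R) i).obj (Opposite.op (ModuleCat.of R M))).obj N) := by
  obtain ⟨i, rfl⟩ := Nat.exists_eq_add_one.2 hi
  have : Projective (ModuleCat.of R M) := (IsProjective.iff_projective (R := R) M).1 inferInstance
  exact ModuleCat.subsingleton_of_isZero (isZero_Ext_succ_of_projective _ _ i)

lemma exists_comp_subtype_eq_of_subsingleton_ext {R : Type u} [CommRing R] {X Y : ModuleCat.{u} R}
    (P : ProjectiveResolution X) {i : ℕ}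
    (hExt : Subsingleton (((Ext R (ModuleCat R) (i + 1)).obj (Opposite.op X)).obj Y))
    {K : Type*} [AddCommGroup K] [Module R K] {π : P.complex.X i →ₗ[R] K}
    (hπ : Function.Exact (P.complex.d (i + 1) i).hom π) (f : LinearMap.ker π →ₗ[R] Y) :
    ∃ g : P.complex.X i →ₗ[R] Y, g ∘ₗ (LinearMap.ker π).subtype = f := by
  have hExact : (P.complex.linearYonedaObj R Y).ExactAt (i + 1) := by
    rw [HomologicalComplex.exactAt_iff_isZero_homology]
    exact (ModuleCat.isZero_of_subsingleton _).of_iso (P.isoExt (i + 1) Y).symm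
  rw [HomologicalComplex.exactAt_iff' _ i (i + 1) (i + 2) (by simp) (by simp),
    ShortComplex.moduleCat_exact_iff] at hExact
  let d : P.complex.X (i + 1) →ₗ[R] LinearMap.ker π :=
    (P.complex.d (i + 1) i).hom.codRestrict _ hπ.apply_apply_eq_zero
  obtain ⟨g, hg⟩ := hExact (ModuleCat.ofHom (f ∘ₗ d)) (by
    change P.complex.d (i + 2) (i + 1) ≫ ModuleCat.ofHom (f ∘ₗ d) = 0
    ext z
    have hdz : d ((P.complex.d (i + 2) (i + 1)).hom z) = 0 := by
      apply Subtype.ext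
      exact LinearMap.congr_fun
        (congrArg ModuleCat.Hom.hom (P.complex.d_comp_d (i + 2) (i + 1) i)) z
    simp [hdz])
  let g' : P.complex.X i ⟶ Y := g
  have hg' : P.complex.d (i + 1) i ≫ g' = ModuleCat.ofHom (f ∘ₗ d) := hg
  refine ⟨g'.hom, ?_⟩
  ext ⟨_, hz⟩
  obtain ⟨z, rfl⟩ := (hπ _).1 hz
  exact LinearMap.congr_fun (congrArg ModuleCat.Hom.hom hg') z

variable {R : Type u} [CommRing R] [IsLocalRing R] {x : maximalIdeal R}
  {θ : maximalIdeal R →ₗ[R] R} {M : Type u} [AddCommGroup M] [Module R M]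

lemma not_subsingleton_ext_succ (hθ : θ x ∉ Ideal.span {(x : R)}) {X : ModuleCat.{u} R}
    (P : ProjectiveResolution X) {i : ℕ} {K : Type*} [AddCommGroup K] [Module R K]
    {π : P.complex.X i →ₗ[R] K} (hπ : Function.Exact (P.complex.d (i + 1) i).hom π)
    {e : P.complex.X i} (hxe : (x : R) • π e = 0)
    (he : π e ∉ maximalIdeal R • (⊤ : Submodule R K)) :
    ¬ Subsingleton (((Ext R (ModuleCat R) (i + 1)).obj (Opposite.op X)).obj
      (ModuleCat.of R R)) := fun hExt ↦ by
  have : Module.Projective R (P.complex.X i) := (IsProjective.iff_projective _).2 (P.projective i)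
  obtain ⟨f, hf⟩ := exists_ker_hom_forall_comp_subtype_ne hθ π hxe he
  obtain ⟨g, hg⟩ := exists_comp_subtype_eq_of_subsingleton_ext P hExt hπ f
  exact hf g hg

lemma not_subsingleton_ext_one (hθ : θ x ∉ Ideal.span {(x : R)}) {n : M}
    (hxn : (x : R) • n = 0) (hn : n ∉ maximalIdeal R • (⊤ : Submodule R M)) :
    ¬ Subsingleton (((Ext R (ModuleCat R) 1).obj
      (Opposite.op (ModuleCat.of R M))).obj (ModuleCat.of R R)) := by
  let P := projectiveResolution (ModuleCat.of R M)
  let p : P.complex.X 0 →ₗ[R] M := (P.π.f 0).hom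
  have hp : Function.Exact (P.complex.d 1 0).hom p :=
    (ShortComplex.ShortExact.moduleCat_exact_iff_function_exact _).1 P.exact₀
  obtain ⟨e, rfl⟩ : ∃ e, p e = n := (ModuleCat.epi_iff_surjective (P.π.f 0)).1 inferInstance n
  exact not_subsingleton_ext_succ hθ P hp hxn hn

lemma not_subsingleton_ext_two_of_not_free (hx : (x : R) ∈ localSocle R)
    (hθ : θ x ∉ Ideal.span {(x : R)}) [Module.FinitePresentation R M]
    (hM : ¬ Module.Free R M) :
    ¬ Subsingleton (((Ext R (ModuleCat R) 2).obj
      (Opposite.op (ModuleCat.of R M))).obj (ModuleCat.of R R)) := by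
  let P := projectiveResolution (ModuleCat.of R M)
  have : Module.Projective R (P.complex.X 0) := (IsProjective.iff_projective _).2 (P.projective 0)
  let p : P.complex.X 0 →ₗ[R] M := (P.π.f 0).hom
  have hp : Function.Exact (P.complex.d 1 0).hom p :=
    (ShortComplex.ShortExact.moduleCat_exact_iff_function_exact _).1 P.exact₀
  have hd : Function.Exact (P.complex.d 2 1).hom (P.complex.d 1 0).hom :=
    (ShortComplex.ShortExact.moduleCat_exact_iff_function_exact _).1 (P.exact_succ 0)
  obtain ⟨n, hnm, hn⟩ := exists_mem_ker_inf_smul_top_of_not_free hM p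
    ((ModuleCat.epi_iff_surjective (P.π.f 0)).1 inferInstance)
  let π : P.complex.X 1 →ₗ[R] LinearMap.ker p :=
    (P.complex.d 1 0).hom.codRestrict _ hp.apply_apply_eq_zero
  have hπ : Function.Exact (P.complex.d 2 1).hom π := fun z ↦
    Subtype.ext_iff.trans (hd z)
  obtain ⟨e, he⟩ := (hp n).1 n.2
  have hπe : π e = n := Subtype.ext he
  have hxn : (x : R) • π e = 0 := hπe ▸ Subtype.ext (smul_eq_zero_of_mem_localSocle hx hnm)
  exact not_subsingleton_ext_succ hθ P hπ hxn (hπe ▸ hn)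

end Ext

theorem stmt7_general (R : Type u) [CommRing R] [IsLocalRing R]
    (hs : ¬ (localSocle R).IsPrincipal) (hs2 : ¬ localSocle R ≤ maximalIdeal R ^ 2)
    (M : Type u) [AddCommGroup M] [Module R M] [Module.FinitePresentation R M] :
    List.TFAE [
      Module.Free R M,
      Module.IsReflexive R M,
      Function.Surjective (Module.Dual.eval R M),
      ∀ i : ℕ, 0 < i →
        Subsingleton (((Ext R (ModuleCat R) i).obj
          (Opposite.op (ModuleCat.of R M))).obj (ModuleCat.of R R)),
      ∀ i : ℕ, 0 < i →
        Subsingleton (((Ext R (ModuleCat R) i).obj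
          (Opposite.op (ModuleCat.of R (Module.Dual R M)))).obj (ModuleCat.of R R))] := by
  obtain ⟨x, hx, hx2⟩ := SetLike.not_le_iff_exists.1 hs2
  lift x to maximalIdeal R using localSocle_le_maximalIdeal hs hx
  obtain ⟨θ, hθ⟩ := exists_maximalIdeal_hom_apply_notMem_span hs hx hx2
  tfae_have 1 → 2 := fun _ ↦ inferInstance
  tfae_have 2 → 3 := fun _ ↦ (Module.bijective_dual_eval R M).2
  tfae_have 3 → 1 := free_of_surjective_dual_eval hx hθ
  tfae_have 1 → 4 := fun _ _ hi ↦ subsingleton_ext_of_free _ hi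
  tfae_have 4 → 1 := fun h ↦ by
    by_contra hM
    exact not_subsingleton_ext_two_of_not_free hx hθ hM (h 2 two_pos)
  tfae_have 1 → 5 := fun _ _ hi ↦ subsingleton_ext_of_free _ hi
  tfae_have 5 → 1 := fun h ↦ by
    by_contra hM
    obtain ⟨f, hf, hxf⟩ := exists_dual_notMem_smul_top_of_not_free hx hx2 hM
    exact not_subsingleton_ext_one hθ hxf hf (h 1 one_pos)
  tfae_finish

/-- Let `(R,𝔪)` be a noetherian local ring with `𝔪³ = 0`, `𝔪` not
generated by a single element, and `𝔪² ≠ (0 :_R 𝔪)` (the socle of `R`). Then for a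
finitely generated `R`-module `M` the following are equivalent:
(1) `M` is free; (2) `M` is reflexive; (3) the evaluation map `M → M**` is surjective;
(4) `Ext^i_R(M,R) = 0` for all `i > 0`; (5) `Ext^i_R(M*,R) = 0` for all `i > 0`. -/
theorem stmt7 (R : Type u) [CommRing R] [IsNoetherianRing R] [IsLocalRing R]
    (hm3 : IsLocalRing.maximalIdeal R ^ 3 = ⊥)
    (hmp : ¬ (IsLocalRing.maximalIdeal R).IsPrincipal)
    (hsoc : IsLocalRing.maximalIdeal R ^ 2 ≠
      Submodule.colon (⊥ : Ideal R) (IsLocalRing.maximalIdeal R))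
    (M : Type u) [AddCommGroup M] [Module R M] [Module.Finite R M] :
    List.TFAE [
      Module.Free R M,
      Module.IsReflexive R M,
      Function.Surjective (Module.Dual.eval R M),
      ∀ i : ℕ, 0 < i →
        Subsingleton (((Ext R (ModuleCat R) i).obj
          (Opposite.op (ModuleCat.of R M))).obj (ModuleCat.of R R)),
      ∀ i : ℕ, 0 < i →
        Subsingleton (((Ext R (ModuleCat R) i).obj
          (Opposite.op (ModuleCat.of R (Module.Dual R M)))).obj (ModuleCat.of R R))] := by
  have := Module.finitePresentation_of_finite R M
  exact stmt7_general R (not_isPrincipal_localSocle hm3 hmp hsoc)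
    (fun h ↦ hsoc ((sq_maximalIdeal_le_localSocle hm3).antisymm h)) M
end

section
/- Let R = ℚ[[X,Y,Z]]/(XY, XZ), the quotient of the formal power series ring in three variables over ℚ by the ideal generated by XY and XZ, and let M = R/(y,z) where y, z denote the images of Y, Z in R. Then M is a reflexive R-module which is not free. -/
/-- The ring `R = ℚ[[X,Y,Z]]/(XY, XZ)`. -/
abbrev FiberProdRing : Type :=
  MvPowerSeries (Fin 3) ℚ ⧸
    (Ideal.span {MvPowerSeries.X 0 * MvPowerSeries.X 1,
        MvPowerSeries.X 0 * MvPowerSeries.X 2} : Ideal (MvPowerSeries (Fin 3) ℚ))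

/-- The ideal `(y,z)` of `R`, generated by the images of `Y` and `Z`. -/
noncomputable abbrev yzIdeal : Ideal FiberProdRing :=
  Ideal.span {Ideal.Quotient.mk _ (MvPowerSeries.X 1),
    Ideal.Quotient.mk _ (MvPowerSeries.X 2)}

/-! Since `X` is a nonzerodivisor and `Y` is a nonzerodivisor modulo `X`, the ideals `(x)` and
`I = (y, z)` of `R` are annihilators of each other. So multiplication by `x` embeds `M = R ⧸ I` into
`R` with image the annihilator of `I`, and `(a, b) ↦ x * a * b` is a perfect pairing of `M` with
itself; hence `M` is reflexive. It is not free, because it is a nonzero module killed by the nonzero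
ideal `I`. -/

open Function

section Quotient

variable {R : Type*} [CommRing R] {I : Ideal R}

theorem dual_quotient_apply_one_mem_annihilator (f : Module.Dual R (R ⧸ I)) :
    f 1 ∈ I.annihilator := by
  refine Submodule.mem_annihilator.2 fun a ha ↦ ?_
  have ha_one : a • (1 : R ⧸ I) = 0 := by
    rw [Algebra.smul_def, mul_one]
    exact Ideal.Quotient.eq_zero_iff_mem.2 ha
  rw [smul_eq_mul, mul_comm, ← smul_eq_mul, ← map_smul, ha_one, map_zero]

theorem quotient_linearMap_ext {N : Type*} [AddCommGroup N] [Module R N] {f g : R ⧸ I →ₗ[R] N}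
    (h : f 1 = g 1) : f = g :=
  Submodule.linearMap_qext I (LinearMap.ext_ring h)

theorem isPerfPair_mul_compr₂ {φ : R ⧸ I →ₗ[R] R} (hφ : Injective φ)
    (hI : I.annihilator ≤ LinearMap.range φ) :
    ((LinearMap.mul R (R ⧸ I)).compr₂ φ).IsPerfPair := by
  have hbij : Bijective ((LinearMap.mul R (R ⧸ I)).compr₂ φ) := by
    refine ⟨fun a b hab ↦ hφ ?_, fun f ↦ ?_⟩
    · simpa using LinearMap.congr_fun hab 1
    · obtain ⟨a, ha⟩ := hI (dual_quotient_apply_one_mem_annihilator f)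
      exact ⟨a, quotient_linearMap_ext (by simpa using ha)⟩
  have hflip : ((LinearMap.mul R (R ⧸ I)).compr₂ φ).flip = (LinearMap.mul R (R ⧸ I)).compr₂ φ :=
    LinearMap.ext₂ fun a b ↦ congrArg φ (mul_comm b a)
  exact ⟨hbij, hflip.symm ▸ hbij⟩

theorem isReflexive_quotient_of_annihilator_eq {x : R} (hx : (Ideal.span {x}).annihilator = I)
    (hI : I.annihilator = Ideal.span {x}) : Module.IsReflexive R (R ⧸ I) := by
  rw [Ideal.annihilator_span_singleton_eq_torsionOf] at hx
  subst hx
  let e := Ideal.quotTorsionOfEquivSpanSingleton R R x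
  let φ : R ⧸ Ideal.torsionOf R R x →ₗ[R] R := (Ideal.span {x}).subtype ∘ₗ e.toLinearMap
  have hφ : Injective φ := Subtype.val_injective.comp e.injective
  have hrange : LinearMap.range φ = Ideal.span {x} := by
    rw [LinearMap.range_comp, LinearEquiv.range, Submodule.map_top, Submodule.range_subtype]
  have := isPerfPair_mul_compr₂ hφ (hI.trans hrange.symm).le
  exact .of_isPerfPair ((LinearMap.mul R _).compr₂ φ)

theorem not_free_quotient (hbot : I ≠ ⊥) (htop : I ≠ ⊤) : ¬ Module.Free R (R ⧸ I) := by
  intro _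
  have := Ideal.Quotient.nontrivial_iff.2 htop
  exact hbot (Ideal.annihilator_quotient.symm.trans (Module.annihilator_eq_bot.2 inferInstance))

end Quotient

section SpanSingletonMul

variable {A : Type*} [CommRing A] {x : A} {J : Ideal A}

open Ideal.Quotient (mk)

theorem annihilator_span_mk_eq_map (hx : x ∈ nonZeroDivisors A) :
    (Ideal.span {mk (Ideal.span {x} * J) x}).annihilator = J.map (mk (Ideal.span {x} * J)) := by
  ext r
  obtain ⟨f, rfl⟩ := Ideal.Quotient.mk_surjective r
  rw [Submodule.mem_annihilator_span_singleton, smul_eq_mul, ← map_mul,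
    Ideal.Quotient.eq_zero_iff_mem, Ideal.mem_quotient_iff_mem Ideal.mul_le_right, mul_comm f x,
    Ideal.mem_span_singleton_mul]
  exact ⟨fun ⟨g, hg, hgf⟩ ↦ (mul_cancel_left_mem_nonZeroDivisors hx).1 hgf ▸ hg,
    fun hf ↦ ⟨f, hf, rfl⟩⟩

theorem annihilator_map_eq_span_mk (hJ : (Ideal.span {x}).colon (J : Set A) = Ideal.span {x}) :
    (J.map (mk (Ideal.span {x} * J))).annihilator = Ideal.span {mk (Ideal.span {x} * J) x} := by
  refine le_antisymm (fun r hr ↦ ?_) ?_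
  · obtain ⟨f, rfl⟩ := Ideal.Quotient.mk_surjective r
    have hf : f ∈ (Ideal.span {x}).colon (J : Set A) := Submodule.mem_colon.2 fun g hg ↦ by
      have hfg := Submodule.mem_annihilator.1 hr _ (Ideal.mem_map_of_mem _ hg)
      rw [smul_eq_mul, ← map_mul, Ideal.Quotient.eq_zero_iff_mem] at hfg
      exact Ideal.mul_le_left hfg
    rw [hJ, Ideal.mem_span_singleton] at hf
    exact Ideal.mem_span_singleton.2 (map_dvd _ hf)
  · rw [Ideal.span_singleton_le_iff_mem, Ideal.map, Submodule.mem_annihilator_span]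
    rintro ⟨_, g, hg, rfl⟩
    rw [smul_eq_mul, ← map_mul, Ideal.Quotient.eq_zero_iff_mem]
    exact Ideal.mul_mem_mul (Ideal.mem_span_singleton_self x) hg

theorem isReflexive_quotient_map_of_colon_eq (hx : x ∈ nonZeroDivisors A)
    (hJ : (Ideal.span {x}).colon (J : Set A) = Ideal.span {x}) :
    Module.IsReflexive (A ⧸ Ideal.span {x} * J)
      ((A ⧸ Ideal.span {x} * J) ⧸ J.map (mk (Ideal.span {x} * J))) :=
  isReflexive_quotient_of_annihilator_eq (annihilator_span_mk_eq_map hx)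
    (annihilator_map_eq_span_mk hJ)

theorem not_free_quotient_map (hJ : ¬ J ≤ Ideal.span {x}) (htop : J ≠ ⊤) :
    ¬ Module.Free (A ⧸ Ideal.span {x} * J)
      ((A ⧸ Ideal.span {x} * J) ⧸ J.map (mk (Ideal.span {x} * J))) := by
  refine not_free_quotient (fun hbot ↦ hJ ?_) (fun h ↦ htop ?_)
  · rw [Ideal.map_eq_bot_iff_le_ker, Ideal.mk_ker] at hbot
    exact hbot.trans Ideal.mul_le_left
  · rw [Ideal.eq_top_iff_one, ← map_one (mk _), Ideal.mem_quotient_iff_mem Ideal.mul_le_right] at h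
    exact (Ideal.eq_top_iff_one J).2 h

end SpanSingletonMul

section PowerSeries

variable {σ k : Type*} [CommRing k] {i j : σ}

open MvPowerSeries (X)

theorem mvPowerSeries_X_dvd_X_iff [Nontrivial k] :
    (X i : MvPowerSeries σ k) ∣ X j ↔ i = j := by
  classical
  refine ⟨fun h ↦ ?_, fun h ↦ h ▸ dvd_rfl⟩
  by_contra hij
  have hcoeff := MvPowerSeries.X_dvd_iff.1 h (Finsupp.single j 1) (Finsupp.single_eq_of_ne hij)
  rw [MvPowerSeries.coeff_index_single_self_X] at hcoeff
  exact one_ne_zero hcoeff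

theorem mvPowerSeries_X_dvd_mul_X_iff (hij : i ≠ j) {f : MvPowerSeries σ k} :
    X i ∣ f * X j ↔ X i ∣ f := by
  refine ⟨fun h ↦ MvPowerSeries.X_dvd_iff.2 fun m hm ↦ ?_, fun h ↦ h.mul_right _⟩
  have hcoeff := MvPowerSeries.X_dvd_iff.1 h (m + Finsupp.single j 1) (by simp [hm, hij])
  rwa [MvPowerSeries.X, MvPowerSeries.coeff_add_mul_monomial, mul_one] at hcoeff

theorem colon_span_X_eq (hij : i ≠ j) {J : Ideal (MvPowerSeries σ k)} (hj : X j ∈ J) :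
    (Ideal.span {X i}).colon (J : Set (MvPowerSeries σ k)) = Ideal.span {X i} := by
  refine le_antisymm (fun f hf ↦ ?_) Ideal.le_colon
  have hfj := Submodule.mem_colon.1 hf _ hj
  rw [smul_eq_mul, Ideal.mem_span_singleton, mvPowerSeries_X_dvd_mul_X_iff hij] at hfj
  exact Ideal.mem_span_singleton.2 hfj

theorem span_X_image_ne_top [Nontrivial k] (s : Set σ) :
    Ideal.span ((X : σ → MvPowerSeries σ k) '' s) ≠ ⊤ := by
  refine ne_top_of_le_ne_top (RingHom.ker_ne_top (MvPowerSeries.constantCoeff (R := k)))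
    (Ideal.span_le.2 ?_)
  rintro _ ⟨l, -, rfl⟩
  exact MvPowerSeries.constantCoeff_X l

end PowerSeries

open MvPowerSeries in
theorem stmt9_general {σ k : Type*} [CommRing k] [Nontrivial k] {i j l : σ} (hij : i ≠ j)
    {K : Ideal (MvPowerSeries σ k)} (hK : K = Ideal.span {X i * X j, X i * X l})
    {I : Ideal (MvPowerSeries σ k ⧸ K)}
    (hI : I = Ideal.span {Ideal.Quotient.mk K (X j), Ideal.Quotient.mk K (X l)}) :
    Module.IsReflexive (MvPowerSeries σ k ⧸ K) ((MvPowerSeries σ k ⧸ K) ⧸ I) ∧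
      ¬ Module.Free (MvPowerSeries σ k ⧸ K) ((MvPowerSeries σ k ⧸ K) ⧸ I) := by
  let J : Ideal (MvPowerSeries σ k) := Ideal.span (X '' {j, l})
  have hj : X j ∈ J := Ideal.subset_span (Set.mem_image_of_mem X (Set.mem_insert j _))
  have hJ : ¬ J ≤ Ideal.span {X i} := fun h ↦
    hij (mvPowerSeries_X_dvd_X_iff.1 (Ideal.mem_span_singleton.1 (h hj)))
  obtain rfl : K = Ideal.span {X i} * J := by
    rw [hK, Ideal.span_mul_span', Set.image_pair, Set.singleton_mul, Set.image_pair]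
  obtain rfl : I = J.map (Ideal.Quotient.mk _) := by
    rw [hI, Ideal.map_span, Set.image_pair, Set.image_pair]
  exact ⟨isReflexive_quotient_map_of_colon_eq X_mem_nonzeroDivisors (colon_span_X_eq hij hj),
    not_free_quotient_map hJ (span_X_image_ne_top _)⟩

/-- Let `R = ℚ[[X,Y,Z]]/(XY, XZ)` and `M = R/(y,z)`, where `y, z` are the
images of `Y, Z` in `R`. Then `M` is a reflexive `R`-module which is not free. -/
theorem stmt9 :
    Module.IsReflexive FiberProdRing (FiberProdRing ⧸ yzIdeal) ∧
      ¬ Module.Free FiberProdRing (FiberProdRing ⧸ yzIdeal) :=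
  stmt9_general (by decide) rfl rfl
end

section
/- Let (R,𝔪) be a noetherian local ring such that for every finitely generated torsion-less R-module M, freeness of the dual M* implies freeness of M. Then the depth of R is less than 2, i.e., there is no R-regular sequence of length two consisting of elements of 𝔪. -/
/-!
If `x, y` is an `M`-regular sequence contained in an ideal `I`, every linear map `f : I → M` is
`z ↦ z • m` for a unique `m`: since `y • f x = x • f y`, regularity of `y` modulo `x` gives
`f x = x • m`, and then `x • f z = z • f x = x • z • m`. For `M = R` this makes the dual of `I` free
of rank one.
If `I` were projective, a dual basis would consist of multiplications by ring elements, and the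
resulting expansion of `x` would read `x = x * e` with `e ∈ I`, forcing `I = R`.
Hence a proper ideal generated by a regular sequence of length two has a free dual without being
projective.
-/

open Function RingTheory
open scoped Pointwise

section Torsionless

variable {R M N : Type*} [CommRing R] [AddCommGroup M] [Module R M] [AddCommGroup N] [Module R N]

theorem dual_eval_injective_of_injective {i : N →ₗ[R] M} (hi : Injective i)
    (hM : Injective (Module.Dual.eval R M)) : Injective (Module.Dual.eval R N) := by
  refine Injective.of_comp (f := i.dualMap.dualMap) ?_
  rw [← LinearMap.coe_comp, Module.Dual.eval_naturality, LinearMap.coe_comp]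
  exact hM.comp hi

theorem ideal_dual_eval_injective (I : Ideal R) : Injective (Module.Dual.eval R I) :=
  dual_eval_injective_of_injective I.injective_subtype (Module.bijective_dual_eval R R).injective

end Torsionless

section RegularPair

variable {R : Type*} [CommRing R] {I : Ideal R} {x y : R}

theorem isRegular_pair_iff_injective :
    Sequence.IsRegular R [x, y] ↔ Injective (fun r : R => x * r) ∧
      Injective (fun r : R ⧸ Ideal.span {x} => Ideal.Quotient.mk (Ideal.span {x}) y * r) ∧
      Ideal.span {x, y} ≠ ⊤ := by
  have smul_top : x • (⊤ : Ideal R) = Ideal.span {x} := by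
    rw [← Submodule.ideal_span_singleton_smul, smul_eq_mul, Ideal.mul_top]
  have ofList_smul_top : Ideal.ofList [x, y] • (⊤ : Ideal R) = Ideal.span {x, y} := by
    rw [smul_eq_mul, Ideal.mul_top, Ideal.ofList_cons, Ideal.ofList_singleton, Ideal.span_insert]
  have regular_mod_x : IsSMulRegular (QuotSMulTop x R) y ↔ IsSMulRegular (R ⧸ Ideal.span {x}) y :=
    (Submodule.quotEquivOfEq _ _ smul_top).isSMulRegular_congr y
  rw [Sequence.isRegular_iff, Sequence.isWeaklyRegular_cons_iff,
    Sequence.isWeaklyRegular_singleton_iff, and_assoc, regular_mod_x, ofList_smul_top, ne_comm]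
  rfl

variable {M : Type*} [AddCommGroup M] [Module R M]

theorem isSMulRegular_of_isWeaklyRegular_cons {rs : List R}
    (h : Sequence.IsWeaklyRegular M (x :: rs)) : IsSMulRegular M x :=
  ((Sequence.isWeaklyRegular_cons_iff M x rs).1 h).1

theorem exists_eq_smul_of_isWeaklyRegular_pair (hxy : Sequence.IsWeaklyRegular M [x, y]) {a b : M}
    (hab : y • a = x • b) : ∃ m, a = x • m := by
  rw [Sequence.isWeaklyRegular_cons_iff, Sequence.isWeaklyRegular_singleton_iff] at hxy
  have a_mem : a ∈ x • (⊤ : Submodule R M) := by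
    refine mem_of_isSMulRegular_quotient_of_smul_mem hxy.2 ?_
    rw [hab]
    exact Submodule.smul_mem_pointwise_smul b x ⊤ Submodule.mem_top
  obtain ⟨m, -, hm⟩ := (Submodule.mem_smul_pointwise_iff_exists a x ⊤).1 a_mem
  exact ⟨m, hm.symm⟩

theorem ideal_smul_apply_comm (f : I →ₗ[R] M) (z w : I) : (z : R) • f w = (w : R) • f z := by
  rw [← map_smul, ← map_smul]
  exact congrArg f (Subtype.ext (mul_comm _ _))

theorem lcomp_ideal_subtype_injective (hxI : x ∈ I) (hx : IsSMulRegular M x) :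
    Injective (LinearMap.lcomp R M I.subtype) := by
  intro f g hfg
  have apply_x : f x = g x := LinearMap.congr_fun hfg ⟨x, hxI⟩
  refine LinearMap.ext_ring (hx ?_)
  simpa only [← map_smul, smul_eq_mul, mul_one] using apply_x

theorem lcomp_ideal_subtype_surjective (hxI : x ∈ I) (hyI : y ∈ I)
    (hxy : Sequence.IsWeaklyRegular M [x, y]) : Surjective (LinearMap.lcomp R M I.subtype) := by
  intro f
  obtain ⟨m, hm⟩ :=
    exists_eq_smul_of_isWeaklyRegular_pair hxy (ideal_smul_apply_comm f ⟨y, hyI⟩ ⟨x, hxI⟩)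
  refine ⟨LinearMap.toSpanSingleton R M m, LinearMap.ext fun z => ?_⟩
  apply isSMulRegular_of_isWeaklyRegular_cons hxy
  calc x • (z : R) • m = (z : R) • x • m := smul_comm _ _ _
    _ = (z : R) • f ⟨x, hxI⟩ := by rw [hm]
    _ = x • f z := ideal_smul_apply_comm f z ⟨x, hxI⟩

theorem free_dual_of_isWeaklyRegular_pair (hxI : x ∈ I) (hyI : y ∈ I)
    (hxy : Sequence.IsWeaklyRegular R [x, y]) : Module.Free R (Module.Dual R I) :=
  .of_equiv <| LinearEquiv.ofBijective (LinearMap.lcomp R R I.subtype)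
    ⟨lcomp_ideal_subtype_injective hxI (isSMulRegular_of_isWeaklyRegular_cons hxy),
      lcomp_ideal_subtype_surjective hxI hyI hxy⟩

theorem eq_top_of_projective_of_lcomp_ideal_subtype_surjective [Module.Projective R I] (hxI : x ∈ I)
    (hx : IsSMulRegular R x) (hI : Surjective (LinearMap.lcomp R R I.subtype)) : I = ⊤ := by
  obtain ⟨s, hs⟩ := Module.projective_def'.1 (inferInstance : Module.Projective R I)
  choose g hg using fun i : I => hI (Finsupp.lapply i ∘ₗ s)
  have coord_x (i : I) : s ⟨x, hxI⟩ i = x * g i 1 :=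
    calc s ⟨x, hxI⟩ i = g i x := (LinearMap.congr_fun (hg i) ⟨x, hxI⟩).symm
      _ = x * g i 1 := by rw [← smul_eq_mul, ← map_smul, smul_eq_mul, mul_one]
  let e : I := ∑ i ∈ (s ⟨x, hxI⟩).support, g i 1 • i
  have x_eq : x • e = ⟨x, hxI⟩ :=
    calc x • e = ∑ i ∈ (s ⟨x, hxI⟩).support, s ⟨x, hxI⟩ i • i := by
          simp only [e, Finset.smul_sum, smul_smul, coord_x]
      _ = ⟨x, hxI⟩ := LinearMap.congr_fun hs ⟨x, hxI⟩
  have e_eq_one : (e : R) = 1 := hx ((congrArg Subtype.val x_eq).trans (mul_one x).symm)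
  exact I.eq_top_iff_one.2 (e_eq_one ▸ e.2)

end RegularPair

theorem stmt13_general {R : Type*} [CommRing R]
    (h : ∀ I : Ideal R, I.FG → Module.Free R (Module.Dual R I) → Module.Projective R I) (x y : R) :
    ¬ Sequence.IsRegular R [x, y] := by
  intro hxy
  have weakly : Sequence.IsWeaklyRegular R [x, y] := hxy.toIsWeaklyRegular
  have hx : x ∈ Ideal.span {x, y} := Ideal.mem_span_pair.2 ⟨1, 0, by ring⟩
  have hy : y ∈ Ideal.span {x, y} := Ideal.mem_span_pair.2 ⟨0, 1, by ring⟩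
  have : Module.Projective R (Ideal.span {x, y}) :=
    h _ (Submodule.fg_span (Set.toFinite _)) (free_dual_of_isWeaklyRegular_pair hx hy weakly)
  exact (isRegular_pair_iff_injective.1 hxy).2.2 <|
    eq_top_of_projective_of_lcomp_ideal_subtype_surjective hx
      (isSMulRegular_of_isWeaklyRegular_cons weakly) (lcomp_ideal_subtype_surjective hx hy weakly)

/-- Let `(R,𝔪)` be a noetherian local ring such that for every finitely
generated torsion-less `R`-module `M` (the evaluation map `M → M**` is injective),
freeness of the dual `M*` implies freeness of `M`. Then the depth of `R` is less than 2:
there is no `R`-regular sequence `x₁, x₂` of elements of `𝔪` (i.e. `x₁` a nonzerodivisor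
on `R`, `x₂` a nonzerodivisor on `R/(x₁)`, and `(x₁,x₂) ≠ R`). -/
theorem stmt13 (R : Type u) [CommRing R] [IsNoetherianRing R] [IsLocalRing R]
    (h : ∀ (M : Type u) [AddCommGroup M] [Module R M], Module.Finite R M →
      Function.Injective (Module.Dual.eval R M) →
      Module.Free R (Module.Dual R M) → Module.Free R M) :
    ¬ ∃ x₁ x₂ : R, x₁ ∈ IsLocalRing.maximalIdeal R ∧ x₂ ∈ IsLocalRing.maximalIdeal R ∧
      Function.Injective (fun r : R => x₁ * r) ∧
      Function.Injective (fun r : R ⧸ Ideal.span {x₁} =>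
        Ideal.Quotient.mk (Ideal.span {x₁}) x₂ * r) ∧
      Ideal.span {x₁, x₂} ≠ (⊤ : Ideal R) := by
  rintro ⟨x, y, -, -, hxy⟩
  exact stmt13_general (fun I hI hdual =>
    have := h I (.of_fg hI) (ideal_dual_eval_injective I) hdual; .of_free)
    x y (isRegular_pair_iff_injective.2 hxy)
end

section
/- Let (R,𝔪) be a noetherian local ring such that for every finitely generated R-module M, the dual M* is free. Then R is a regular local ring of Krull dimension at most two. -/
/-!
For a vector `v ∈ Rⁿ`, the dual of `Rⁿ / Rv` is the module of syzygies of `v`, so these modules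
are free. A syzygy module of one element is an annihilator, and it is faithful if it is free and
nonzero; hence `R` is a domain. The syzygy module of `(y, x)` with `x ≠ 0` then has rank one, so the
colon ideal `(x) : y` is principal; hence irreducible elements are prime and `R` is factorial.

If `x, y, z` were part of a minimal system of generators of `𝔪`, their syzygy module `K` would be
free of rank two and contained in `𝔪R³`. The Koszul relations are the cross products
`c ⨯ (x, y, z)`; if such a product lies in `𝔪K ⊆ 𝔪²R³`, then minimality forces `c ∈ 𝔪R³`. So they
span a three-dimensional subspace of the two-dimensional space `K / 𝔪K`, which is absurd.

Hence `𝔪` has at most two generators. Either `R` is a principal ideal domain, or a nonprincipal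
prime `P` contains a prime element `p` and `0 < (p) < P` shows that the dimension is at least two.
-/

section Syzygies

variable {R ι : Type*} [CommRing R] [Fintype ι]

/-- The module of syzygies of a finite family `v` of ring elements: the coefficient vectors of
the linear relations among the `v i`. -/
def syzygies (v : ι → R) : Submodule R (ι → R) :=
  LinearMap.ker (Fintype.linearCombination R v)

lemma mem_syzygies {v w : ι → R} : w ∈ syzygies v ↔ w ⬝ᵥ v = 0 := by
  simp only [syzygies, LinearMap.mem_ker, Fintype.linearCombination_apply, smul_eq_mul,
    dotProduct]

lemma comap_piEquiv_dualAnnihilator_span_singleton (v : ι → R) :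
    (Submodule.span R {v}).dualAnnihilator.comap (Module.piEquiv ι R R).toLinearMap =
      syzygies v := by
  ext w
  have hw (a : R) : Module.piEquiv ι R R w (a • v) = a * (w ⬝ᵥ v) := by
    rw [map_smul, Module.piEquiv_apply_apply, smul_eq_mul, dotProduct_comm]
    rfl
  simp only [Submodule.mem_comap, LinearEquiv.coe_coe, Submodule.mem_dualAnnihilator,
    Submodule.mem_span_singleton, forall_exists_index, forall_apply_eq_imp_iff, hw, mem_syzygies]
  exact ⟨fun h ↦ by simpa only [one_mul] using h 1, fun h a ↦ by rw [h, mul_zero]⟩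

/-- The dual of the cokernel of `v : R → Rⁿ` is the kernel of the transpose of `v`. This
turns freeness of duals into freeness of syzygy modules. -/
noncomputable def dualQuotientSpanSingletonEquivSyzygies (v : ι → R) :
    Module.Dual R ((ι → R) ⧸ Submodule.span R {v}) ≃ₗ[R] syzygies v :=
  (Submodule.span R {v}).dualQuotEquivDualAnnihilator ≪≫ₗ
    ((Module.piEquiv ι R R).ofSubmodule' _).symm ≪≫ₗ
    LinearEquiv.ofEq _ _ (comap_piEquiv_dualAnnihilator_span_singleton v)

lemma finrank_syzygies_add_one [IsDomain R] {v : ι → R} (hv : v ≠ 0) :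
    Module.finrank R (syzygies v) + 1 = Fintype.card ι := by
  classical
  obtain ⟨i, hi⟩ := Function.ne_iff.mp hv
  have hrange : LinearMap.range (Fintype.linearCombination R v) ≠ ⊥ := by
    rw [Fintype.range_linearCombination]
    exact fun h ↦ hi ((Submodule.span_eq_bot.mp h) _ (Set.mem_range_self i))
  have hrank : Module.finrank R (LinearMap.range (Fintype.linearCombination R v)) = 1 := by
    have := Submodule.nontrivial_iff_ne_bot.mpr hrange
    refine le_antisymm ?_ Module.finrank_pos
    simpa only [Module.finrank_self] using
      Submodule.finrank_le (LinearMap.range (Fintype.linearCombination R v))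
  rw [← Module.finrank_fintype_fun_eq_card R,
    ← Submodule.finrank_quotient_add_finrank (syzygies v), add_comm, syzygies,
    (Fintype.linearCombination R v).quotKerEquivRange.finrank_eq, hrank]

/-- The Koszul relations of three elements, encoded as the cross products `c ⨯ v`, so that the
basis vectors `c` give the three standard relations up to sign. -/
def koszulSyzygies (v : Fin 3 → R) : (Fin 3 → R) →ₗ[R] syzygies v :=
  (crossProduct.flip v).codRestrict (syzygies v) fun c ↦ by
    rw [mem_syzygies, dotProduct_comm]
    exact dot_cross_self c v

end Syzygies

section PiSubmodule

variable {R ι : Type*} [CommRing R]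

lemma apply_mem_mul_of_mem_smul_top {K : Submodule R (ι → R)} {I J : Ideal R}
    (hK : ∀ w ∈ K, ∀ i, w i ∈ J) {w : K} (hw : w ∈ I • (⊤ : Submodule R K)) (i : ι) :
    w.1 i ∈ I * J := by
  induction hw using Submodule.smul_induction_on' with
  | smul r hr u _ => exact Ideal.mul_mem_mul hr (hK u u.2 i)
  | add u _ v _ hu hv => exact add_mem hu hv

lemma mem_smul_top_of_forall_mem [Finite ι] {I : Ideal R} {c : ι → R} (hc : ∀ i, c i ∈ I) :
    c ∈ I • (⊤ : Submodule R (ι → R)) := by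
  classical
  have := Fintype.ofFinite ι
  rw [pi_eq_sum_univ' c]
  exact sum_mem fun i _ ↦ Submodule.smul_mem_smul (hc i) Submodule.mem_top

end PiSubmodule

section Factorial

variable {R : Type*} [CommRing R]

lemma eq_zero_or_eq_zero_of_free_syzygies {x y : R} [Module.Free R (syzygies ![x])]
    (hxy : x * y = 0) : x = 0 ∨ y = 0 := by
  by_contra! ⟨hx, hy⟩
  have : Nontrivial (syzygies ![x]) := by
    refine Submodule.nontrivial_iff_ne_bot.mpr (Submodule.ne_bot_iff _ |>.mpr ⟨![y], ?_, ?_⟩)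
    · simpa [mem_syzygies, mul_comm] using hxy
    · simpa using hy
  refine hx (eq_of_smul_eq_smul (α := syzygies ![x]) fun ⟨w, hw⟩ ↦ ?_)
  ext i
  simpa [mem_syzygies, Matrix.vecHead, mul_comm, Subsingleton.elim i 0] using hw

variable [IsDomain R]

lemma exists_dvd_mul_iff_of_free_syzygies {x y : R} (hx : x ≠ 0)
    [Module.Free R (syzygies ![y, x])] : ∃ d, ∀ r, x ∣ r * y ↔ d ∣ r := by
  have hv : ![y, x] ≠ 0 := fun h ↦ hx (congrFun h 1)
  have hrank : Module.finrank R (syzygies ![y, x]) = 1 := by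
    simpa using finrank_syzygies_add_one hv
  obtain ⟨⟨w, hw⟩, -, hspan⟩ := finrank_eq_one_iff'.mp hrank
  have hrel : w 0 * y + w 1 * x = 0 := by
    simpa [mem_syzygies, Matrix.vecHead, Matrix.vecTail] using hw
  refine ⟨w 0, fun r ↦ ⟨fun ⟨s, hs⟩ ↦ ?_, fun ⟨s, hs⟩ ↦ ⟨-(w 1 * s), ?_⟩⟩⟩
  · obtain ⟨c, hc⟩ := hspan ⟨![r, -s], by simp [mem_syzygies, hs, mul_comm]⟩
    have hcr : c * w 0 = r := congrFun (congrArg Subtype.val hc) 0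
    exact ⟨c, by rw [← hcr, mul_comm]⟩
  · linear_combination y * hs + s * hrel

lemma prime_of_irreducible_of_free_syzygies {p : R} (hp : Irreducible p)
    (h : ∀ a, Module.Free R (syzygies ![a, p])) : Prime p := by
  refine ⟨hp.ne_zero, hp.not_isUnit, fun b a hba ↦ or_iff_not_imp_right.mpr fun ha ↦ ?_⟩
  have := h a
  obtain ⟨d, hd⟩ := exists_dvd_mul_iff_of_free_syzygies (y := a) hp.ne_zero
  have hd_not_isUnit : ¬IsUnit d := fun hu ↦ ha (by simpa only [one_mul] using (hd 1).mpr hu.dvd)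
  have hdp : d ∣ p := (hd p).mp (dvd_mul_right p a)
  exact ((hp.dvd_iff.mp hdp).resolve_left hd_not_isUnit).dvd.trans ((hd b).mp hba)

lemma uniqueFactorizationMonoid_of_free_syzygies [WfDvdMonoid R]
    (h : ∀ a b : R, Module.Free R (syzygies ![a, b])) : UniqueFactorizationMonoid R where
  irreducible_iff_prime :=
    ⟨fun hp ↦ prime_of_irreducible_of_free_syzygies hp fun a ↦ h a _, Prime.irreducible⟩

lemma two_le_ringKrullDim_of_not_isPrincipalIdealRing [UniqueFactorizationMonoid R]
    (h : ¬IsPrincipalIdealRing R) : 2 ≤ ringKrullDim R := by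
  obtain ⟨P, hP, hP_principal⟩ : ∃ P : Ideal R, P.IsPrime ∧ ¬P.IsPrincipal := by
    by_contra! hall
    exact h (.of_prime hall)
  have hP_ne_bot : P ≠ ⊥ := fun hbot ↦ hP_principal (hbot ▸ inferInstance)
  obtain ⟨p, hpP, hp⟩ := hP.exists_mem_prime_of_ne_bot hP_ne_bot
  have : (Ideal.span {p}).IsPrime := (Ideal.span_singleton_prime hp.ne_zero).mpr hp
  have hbot_lt : ⊥ < Ideal.span {p} :=
    bot_lt_iff_ne_bot.mpr (mt Ideal.span_singleton_eq_bot.mp hp.ne_zero)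
  have hlt : Ideal.span {p} < P :=
    lt_of_le_of_ne ((Ideal.span_singleton_le_iff_mem P).mpr hpP)
      fun heq ↦ hP_principal ⟨p, heq.symm⟩
  have hheight : 2 ≤ P.height :=
    calc (2 : ℕ∞) ≤ (⊥ : Ideal R).height + 1 + 1 := by
          rw [add_assoc, one_add_one_eq_two]; exact le_add_self
      _ ≤ (Ideal.span {p}).height + 1 := by
          gcongr; exact Ideal.height_add_one_le_of_lt_of_isPrime hbot_lt
      _ ≤ P.height := Ideal.height_add_one_le_of_lt_of_isPrime hlt
  exact (WithBot.coe_le_coe.mpr hheight).trans (Ideal.height_le_ringKrullDim_of_ne_top hP.ne_top)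

end Factorial

section Local

open IsLocalRing Matrix

variable {R ι : Type*} [CommRing R] [IsLocalRing R] [Fintype ι]

lemma finrank_le_finrank_of_comap_smul_top_le {M N : Type*} [AddCommGroup M] [Module R M]
    [Module.Free R M] [AddCommGroup N] [Module R N] [Module.Free R N] [Module.Finite R N]
    {φ : M →ₗ[R] N}
    (hφ : (maximalIdeal R • ⊤ : Submodule R N).comap φ ≤ maximalIdeal R • ⊤) :
    Module.finrank R M ≤ Module.finrank R N := by
  rw [← Module.finrank_baseChange (R := ResidueField R) (M' := M),
    ← Module.finrank_baseChange (R := ResidueField R) (M' := N)]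
  refine LinearMap.finrank_le_finrank_of_injective (f := φ.baseChange (ResidueField R)) ?_
  rw [injective_iff_map_eq_zero]
  intro t ht
  obtain ⟨x, rfl⟩ := TensorProduct.mk_surjective R M (ResidueField R) residue_surjective t
  have hφx : φ x ∈ maximalIdeal R • (⊤ : Submodule R N) := by
    rw [← LinearMap.ker_tensorProductMk]
    exact ht
  have hx : x ∈ maximalIdeal R • (⊤ : Submodule R M) := hφ hφx
  rw [← LinearMap.ker_tensorProductMk] at hx
  exact hx

lemma mem_maximalIdeal_of_sum_mul_mem_sq {t : ι → maximalIdeal R}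
    (ht : LinearIndependent (ResidueField R) fun i ↦ (maximalIdeal R).toCotangent (t i))
    {c : ι → R} (hc : ∑ i, c i * t i ∈ maximalIdeal R ^ 2) (i : ι) : c i ∈ maximalIdeal R := by
  have hzero : (maximalIdeal R).toCotangent (∑ i, c i • t i) = 0 := by
    rw [Ideal.toCotangent_eq_zero]
    simpa using hc
  rw [map_sum] at hzero
  rw [← residue_eq_zero_iff]
  refine Fintype.linearIndependent_iff.mp ht (fun i ↦ residue R (c i)) ?_ i
  simpa only [map_smul] using! hzero

lemma apply_mem_maximalIdeal_of_mem_syzygies {t : ι → maximalIdeal R}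
    (ht : LinearIndependent (ResidueField R) fun i ↦ (maximalIdeal R).toCotangent (t i))
    {w : ι → R} (hw : w ∈ syzygies fun i ↦ (t i : R)) (i : ι) : w i ∈ maximalIdeal R := by
  have hrel : ∑ i, w i * (t i : R) = 0 := mem_syzygies.mp hw
  exact mem_maximalIdeal_of_sum_mul_mem_sq ht (hrel ▸ zero_mem _) i

lemma comap_koszulSyzygies_smul_top_le {t : Fin 3 → maximalIdeal R}
    (ht : LinearIndependent (ResidueField R) fun i ↦ (maximalIdeal R).toCotangent (t i)) :
    (maximalIdeal R • ⊤ : Submodule R (syzygies fun i ↦ (t i : R))).comap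
      (koszulSyzygies fun i ↦ (t i : R)) ≤ maximalIdeal R • ⊤ := by
  intro c hc
  have hsq (i : Fin 3) : (c ⨯₃ fun i ↦ (t i : R)) i ∈ maximalIdeal R ^ 2 :=
    sq (maximalIdeal R) ▸ apply_mem_mul_of_mem_smul_top
      (fun _ ↦ apply_mem_maximalIdeal_of_mem_syzygies ht) hc i
  simp only [cross_apply] at hsq
  have h0 := mem_maximalIdeal_of_sum_mul_mem_sq ht (c := ![0, -c 2, c 1]) (by
    simpa [Fin.sum_univ_three, neg_add_eq_sub] using hsq 0)
  have h1 := mem_maximalIdeal_of_sum_mul_mem_sq ht (c := ![c 2, 0, -c 0]) (by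
    simpa [Fin.sum_univ_three, ← sub_eq_add_neg] using hsq 1)
  refine mem_smul_top_of_forall_mem fun i ↦ ?_
  fin_cases i
  · simpa using h1 2
  · exact h0 2
  · exact h1 0

lemma not_linearIndependent_toCotangent_of_free_syzygies [IsDomain R] {t : Fin 3 → maximalIdeal R}
    [Module.Free R (syzygies fun i ↦ (t i : R))] :
    ¬LinearIndependent (ResidueField R) fun i ↦ (maximalIdeal R).toCotangent (t i) := by
  intro ht
  have hv : (fun i ↦ (t i : R)) ≠ 0 := fun h ↦ ht.ne_zero 0 (by
    rw [show t 0 = 0 from Subtype.ext (congrFun h 0), map_zero])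
  have hrank : Module.finrank R (syzygies fun i ↦ (t i : R)) + 1 = 3 :=
    finrank_syzygies_add_one hv
  have : Module.Finite R (syzygies fun i ↦ (t i : R)) :=
    Module.finite_of_finrank_pos (by lia)
  have hkoszul := comap_koszulSyzygies_smul_top_le ht
  have hle := finrank_le_finrank_of_comap_smul_top_le hkoszul
  rw [Module.finrank_fin_fun] at hle
  lia

lemma spanFinrank_maximalIdeal_le_two_of_free_syzygies [IsNoetherianRing R] [IsDomain R]
    (h : ∀ v : Fin 3 → R, Module.Free R (syzygies v)) : (maximalIdeal R).spanFinrank ≤ 2 := by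
  by_contra! hlt
  rw [spanFinrank_maximalIdeal_eq_finrank_cotangentSpace] at hlt
  obtain ⟨f, hf⟩ := exists_linearIndependent_of_le_finrank hlt
  choose t ht using fun i ↦ (maximalIdeal R).toCotangent_surjective (f i)
  have := h fun i ↦ t i
  exact not_linearIndependent_toCotangent_of_free_syzygies (t := t) (by simpa only [ht] using hf)

lemma isRegularLocalRing_of_spanFinrank_maximalIdeal_le_two [IsNoetherianRing R] [IsDomain R]
    [UniqueFactorizationMonoid R] (h : (maximalIdeal R).spanFinrank ≤ 2) :
    IsRegularLocalRing R := by
  by_cases hR : IsPrincipalIdealRing R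
  · infer_instance
  · refine .of_spanFinrank_maximalIdeal_le R (le_trans ?_
      (two_le_ringKrullDim_of_not_isPrincipalIdealRing hR))
    exact_mod_cast h

lemma exists_finset_span_eq_maximalIdeal_and_card_eq_ringKrullDim (R : Type*) [CommRing R]
    [IsRegularLocalRing R] :
    ∃ s : Finset R, Ideal.span (s : Set R) = maximalIdeal R ∧
      (s.card : WithBot ℕ∞) = ringKrullDim R := by
  have hfg : Submodule.FG (maximalIdeal R) := IsNoetherian.noetherian _
  have hfin := Submodule.FG.finite_generators hfg
  refine ⟨hfin.toFinset, ?_, ?_⟩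
  · rw [Set.Finite.coe_toFinset]
    exact Submodule.span_generators _
  · rw [← Set.ncard_eq_toFinset_card _ hfin, Submodule.FG.generators_ncard hfg,
      IsRegularLocalRing.spanFinrank_maximalIdeal]

end Local

theorem stmt14_general (R : Type*) [CommRing R] [IsNoetherianRing R] [IsLocalRing R]
    (h : ∀ n ≤ 3, ∀ v : Fin n → R,
      Module.Free R (Module.Dual R ((Fin n → R) ⧸ Submodule.span R {v}))) :
    IsRegularLocalRing R ∧ ringKrullDim R ≤ 2 := by
  have hfree (n : ℕ) (hn : n ≤ 3) (v : Fin n → R) : Module.Free R (syzygies v) :=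
    have := h n hn v
    .of_equiv (dualQuotientSpanSingletonEquivSyzygies v)
  have : NoZeroDivisors R := ⟨fun {x _} hxy ↦
    have := hfree 1 (by lia) ![x]
    eq_zero_or_eq_zero_of_free_syzygies hxy⟩
  have : IsDomain R := NoZeroDivisors.to_isDomain R
  have : UniqueFactorizationMonoid R :=
    uniqueFactorizationMonoid_of_free_syzygies fun _ _ ↦ hfree 2 (by lia) _
  have hle : (IsLocalRing.maximalIdeal R).spanFinrank ≤ 2 :=
    spanFinrank_maximalIdeal_le_two_of_free_syzygies (hfree 3 le_rfl)
  refine ⟨isRegularLocalRing_of_spanFinrank_maximalIdeal_le_two hle, ?_⟩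
  exact (ringKrullDim_le_spanFinrank_maximalIdeal R).trans (by exact_mod_cast hle)

/-- Let `(R,𝔪)` be a noetherian local ring such that for every finitely
generated `R`-module `M`, the dual `M*` is free. Then `R` is a regular local ring
(the maximal ideal is generated by as many elements as the Krull dimension) of Krull
dimension at most two. -/
theorem stmt14 (R : Type u) [CommRing R] [IsNoetherianRing R] [IsLocalRing R]
    (h : ∀ (M : Type u) [AddCommGroup M] [Module R M], Module.Finite R M →
      Module.Free R (Module.Dual R M)) :
    (∃ s : Finset R, Ideal.span (s : Set R) = IsLocalRing.maximalIdeal R ∧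
      (s.card : WithBot ℕ∞) = ringKrullDim R) ∧ ringKrullDim R ≤ 2 := by
  obtain ⟨_, hdim⟩ := stmt14_general R fun _ _ _ ↦ h _ inferInstance
  exact ⟨exists_finset_span_eq_maximalIdeal_and_card_eq_ringKrullDim R, hdim⟩
end
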